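/- arXiv:1903.01929 — 3 statements merged into one kernel-verified Lean document; each statement's English description precedes it below -/
import Mathlib

section
/- Let ℓ be a prime, T a free ℤ_ℓ-module of finite rank, and Π ⊆ GL(T) a closed subgroup whose Zariski closure G in GL(T ⊗ ℚ_ℓ) is reductive. Set s_ℓ = ℓ if ℓ ≠ 2 and s_ℓ = 4 if ℓ = 2. If Π acts trivially on T/s_ℓT, then for all integers n, m ≥ 0 and every open subgroup U ⊆ Π of finite index, the U-invariants of the tensor space T^{⊗n} ⊗ (T^∨)^{⊗m} ⊗ ℚ_ℓ coincide with the Π-invariants. -/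
noncomputable section
open Matrix

/-- The Zariski topology on the space of square matrices over `K`: the topology generated by
the basic open sets `{M | p(M) ≠ 0}` for polynomials `p` in the matrix entries. -/
def zariskiMat (n : Type*) [Fintype n] (K : Type*) [CommRing K] :
    TopologicalSpace (Matrix n n K) :=
  TopologicalSpace.generateFrom
    {U | ∃ p : MvPolynomial (n × n) K,
      U = {M : Matrix n n K | MvPolynomial.eval (fun q => M q.1 q.2) p ≠ 0}}

/-- The Zariski topology on the algebraic group `GL_n(K)`, induced by the closed embedding
`g ↦ (g, g⁻¹)` into matrix pairs. -/
def zariskiGL (n : Type*) [Fintype n] [DecidableEq n] (K : Type*) [CommRing K] :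
    TopologicalSpace (GL n K) :=
  TopologicalSpace.induced
    (fun g => (((g : GL n K) : Matrix n n K), ((g⁻¹ : GL n K) : Matrix n n K)))
    (@instTopologicalSpaceProd _ _ (zariskiMat n K) (zariskiMat n K))

variable {n : Type*} [Fintype n] [DecidableEq n] {K : Type*} [CommRing K]

/-- Zariski closure in `GL_n(K)`. -/
def zClosure (S : Set (GL n K)) : Set (GL n K) := @closure _ (zariskiGL n K) S

/-- Zariski connectedness in `GL_n(K)`. -/
def zIsConnected (S : Set (GL n K)) : Prop := @IsConnected _ (zariskiGL n K) S

/-- Zariski closedness in `GL_n(K)`. -/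
def zIsClosed (S : Set (GL n K)) : Prop := @IsClosed _ (zariskiGL n K) S

/-- The connected component of `g` inside `S ⊆ GL_n(K)`, for the Zariski topology; for
`g = 1` and `S = G` an algebraic subgroup this is the neutral component `G⁰`. -/
def zComponentIn (S : Set (GL n K)) (g : GL n K) : Set (GL n K) :=
  @connectedComponentIn _ (zariskiGL n K) S g

/-- The set `π₀` of connected components of a subset of `GL_n(K)` in the Zariski topology. -/
def zPi0 (S : Set (GL n K)) : Type _ :=
  @ConnectedComponents S (TopologicalSpace.induced Subtype.val (zariskiGL n K))

/-- The tensor space `T^{n,m}(V) = V^{⊗n} ⊗ (V^∨)^{⊗m}`. -/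
abbrev TensorSpace (K V : Type*) [CommRing K] [AddCommGroup V] [Module K V] (n m : ℕ) :=
  TensorProduct K (TensorPower K n V) (TensorPower K m (Module.Dual K V))

/-- The action of an invertible endomorphism `f` (with inverse `finv`) of `V` on
`T^{n,m}(V)`: `f` on each tensor factor `V` and `φ ↦ φ ∘ finv` on each dual factor. -/
def tensorAct {K V : Type*} [CommRing K] [AddCommGroup V] [Module K V]
    (f finv : V →ₗ[K] V) (n m : ℕ) :
    TensorSpace K V n m →ₗ[K] TensorSpace K V n m :=
  TensorProduct.map (PiTensorProduct.map fun _ => f)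
    (PiTensorProduct.map fun _ => finv.dualMap)

/-- The representation of `Γ` on `K^n` induced by a homomorphism `Γ → GL_n(K)`. -/
def glRep {K : Type*} [Field K] {nn : Type*} [Fintype nn] [DecidableEq nn]
    {Γ : Type*} [Group Γ] (ρ : Γ →* GL nn K) : Representation K Γ (nn → K) :=
  ((Matrix.toLinAlgEquiv' (R := K) (n := nn)).toAlgHom.toRingHom.toMonoidHom).comp
    ((Units.coeHom (Matrix nn nn K)).comp ρ)

/-- The inclusion `GL_r(ℤ_ℓ) → GL_r(ℚ_ℓ)`. -/
def glPadicIncl (ℓ r : ℕ) [Fact ℓ.Prime] : GL (Fin r) ℤ_[ℓ] →* GL (Fin r) ℚ_[ℓ] :=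
  Units.map (((PadicInt.Coe.ringHom (p := ℓ)).mapMatrix :
    Matrix (Fin r) (Fin r) ℤ_[ℓ] →+* Matrix (Fin r) (Fin r) ℚ_[ℓ])).toMonoidHom

lemma aux_val (ℓ j : ℕ) [hl : Fact ℓ.Prime] (hj : 1 ≤ j) :
    ‖((if ℓ = 2 then 4 else ℓ : ℕ) : ℚ_[ℓ])‖ ^ j ≤ ‖((j + 1 : ℕ) : ℚ_[ℓ])‖ * (ℓ : ℝ)⁻¹ := by
  have h2 := hl.out.two_le
  have hv : ℓ ^ padicValNat ℓ (j + 1) ≤ j + 1 :=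
    Nat.le_of_dvd (Nat.succ_pos _) pow_padicValNat_dvd
  have hnorm : ‖((j + 1 : ℕ) : ℚ_[ℓ])‖ = ((ℓ : ℝ)⁻¹) ^ padicValNat ℓ (j + 1) := by
    rw [Padic.norm_eq_zpow_neg_valuation (Nat.cast_ne_zero.2 (Nat.succ_ne_zero j)), Padic.valuation_natCast]
    simp
  rw [hnorm, ← pow_succ]
  have hl0 : (0 : ℝ) ≤ (ℓ : ℝ)⁻¹ := by positivity
  have hl1 : (ℓ : ℝ)⁻¹ ≤ 1 := by
    apply inv_le_one_of_one_le₀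
    exact_mod_cast (by omega : 1 ≤ ℓ)
  generalize padicValNat ℓ (j + 1) = v at *
  split_ifs with h
  · subst h
    have : ‖((4 : ℕ) : ℚ_[2])‖ = (((2 : ℕ) : ℝ)⁻¹) ^ 2 := by
      rw [show ((4 : ℕ) : ℚ_[2]) = ((2 : ℕ) : ℚ_[2]) ^ 2 by norm_num, norm_pow, Padic.norm_p]
    rw [this, ← pow_mul]
    apply pow_le_pow_of_le_one hl0 hl1
    have := Nat.lt_two_pow_self (n := v)
    omega
  · rw [Padic.norm_p]
    apply pow_le_pow_of_le_one hl0 hl1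
    have h3 : 3 ≤ ℓ := by omega
    have h4 : 3 ^ v ≤ j + 1 := (Nat.pow_le_pow_left h3 v).trans hv
    have h5 : v = 0 ∨ v + 2 ≤ 3 ^ v := by
      clear * -
      induction v with
      | zero => simp
      | succ v ih => right; rcases ih with rfl | ih
                     · simp
                     · rw [pow_succ]; omega
    omega

lemma aux_choose (ℓ k j : ℕ) [hl : Fact ℓ.Prime] (hj : 1 ≤ j) (hk : 0 < k) :
    ‖((k.choose (j + 1) : ℕ) : ℚ_[ℓ])‖ * ‖((if ℓ = 2 then 4 else ℓ : ℕ) : ℚ_[ℓ])‖ ^ j ≤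
      ‖(k : ℚ_[ℓ])‖ * (ℓ : ℝ)⁻¹ := by
  obtain ⟨k, rfl⟩ : ∃ k', k = k' + 1 := ⟨k - 1, by omega⟩
  have h := Nat.add_one_mul_choose_eq k j
  have h' : ‖((k + 1 : ℕ) : ℚ_[ℓ])‖ * ‖((k.choose j : ℕ) : ℚ_[ℓ])‖ =
      ‖(((k + 1).choose (j + 1) : ℕ) : ℚ_[ℓ])‖ * ‖((j + 1 : ℕ) : ℚ_[ℓ])‖ := by
    rw [← norm_mul, ← norm_mul, ← Nat.cast_mul, ← Nat.cast_mul, h]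
  have h1 : ‖((k.choose j : ℕ) : ℚ_[ℓ])‖ ≤ 1 := by
    simpa using Padic.norm_int_le_one (p := ℓ) (k.choose j : ℤ)
  calc _ ≤ ‖(((k + 1).choose (j + 1) : ℕ) : ℚ_[ℓ])‖ * (‖((j + 1 : ℕ) : ℚ_[ℓ])‖ * (ℓ : ℝ)⁻¹) :=
        mul_le_mul_of_nonneg_left (aux_val ℓ j hj) (norm_nonneg _)
    _ = ‖((k + 1 : ℕ) : ℚ_[ℓ])‖ * (ℓ : ℝ)⁻¹ * ‖((k.choose j : ℕ) : ℚ_[ℓ])‖ := by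
        rw [← mul_assoc, ← h']; ring
    _ ≤ _ := mul_le_of_le_one_right (by positivity) h1

lemma aux_core (ℓ : ℕ) [hl : Fact ℓ.Prime] {E : Type*} [NormedAddCommGroup E]
    [NormedSpace ℚ_[ℓ] E] [IsUltrametricDist E] (N : Module.End ℚ_[ℓ] E)
    (hN : ∀ x, ‖N x‖ ≤ ‖((if ℓ = 2 then 4 else ℓ : ℕ) : ℚ_[ℓ])‖ * ‖x‖)
    (k : ℕ) (hk : 0 < k) (w : E) (hw : ((N + 1) ^ k) w = w) : N w = 0 := by
  set c := ‖((if ℓ = 2 then 4 else ℓ : ℕ) : ℚ_[ℓ])‖ with hc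
  have hc0 : 0 ≤ c := norm_nonneg _
  have hNj : ∀ (j : ℕ) x, ‖(N ^ j) x‖ ≤ c ^ j * ‖x‖ := by
    intro j x
    induction j with
    | zero => simp
    | succ j ih =>
      rw [pow_succ', Module.End.mul_apply, pow_succ']
      calc _ ≤ c * ‖(N ^ j) x‖ := hN _
        _ ≤ c * (c ^ j * ‖x‖) := mul_le_mul_of_nonneg_left ih hc0
        _ = _ := by ring
  obtain ⟨k, rfl⟩ : ∃ k', k = k' + 1 := ⟨k - 1, by omega⟩
  have hexp : ∑ j ∈ Finset.range k,
      (((k + 1).choose (j + 2) : ℕ) : ℚ_[ℓ]) • (N ^ (j + 1)) (N w) +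
      ((k + 1 : ℕ) : ℚ_[ℓ]) • N w = 0 := by
    have h1 := hw
    rw [(Commute.one_right N).add_pow, Finset.sum_range_succ', Finset.sum_range_succ'] at h1
    simp only [one_pow, mul_one, LinearMap.add_apply, LinearMap.sum_apply, pow_zero,
      Nat.choose_zero_right, Nat.cast_one, Module.End.one_apply, zero_add, pow_one,
      Nat.choose_one_right, add_eq_right] at h1
    rw [← h1]
    congr 1
    · refine Finset.sum_congr rfl fun j _ => ?_
      rw [← Nat.cast_comm, Module.End.mul_apply, pow_succ N (j + 1), Module.End.mul_apply,
        Module.End.natCast_apply, Nat.cast_smul_eq_nsmul]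
    · rw [← Nat.cast_comm, Module.End.mul_apply,
        Module.End.natCast_apply, Nat.cast_smul_eq_nsmul]
  have hle : ‖((k + 1 : ℕ) : ℚ_[ℓ]) • N w‖ ≤ ‖((k + 1 : ℕ) : ℚ_[ℓ])‖ * (ℓ : ℝ)⁻¹ * ‖N w‖ := by
    rw [← norm_neg, ← eq_neg_of_add_eq_zero_left hexp]
    apply IsUltrametricDist.norm_sum_le_of_forall_le_of_nonneg (by positivity)
    intro j _
    rw [norm_smul]
    calc _ ≤ ‖(((k + 1).choose (j + 2) : ℕ) : ℚ_[ℓ])‖ * (c ^ (j + 1) * ‖N w‖) :=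
          mul_le_mul_of_nonneg_left (hNj _ _) (norm_nonneg _)
      _ = (‖(((k + 1).choose (j + 2) : ℕ) : ℚ_[ℓ])‖ * c ^ (j + 1)) * ‖N w‖ := by ring
      _ ≤ _ := mul_le_mul_of_nonneg_right
          (aux_choose ℓ (k + 1) (j + 1) (by omega) hk) (norm_nonneg _)
  rw [norm_smul, mul_assoc] at hle
  have hk0 : 0 < ‖((k + 1 : ℕ) : ℚ_[ℓ])‖ := norm_pos_iff.2 (Nat.cast_ne_zero.2 (Nat.succ_ne_zero k))
  have h3 := le_of_mul_le_mul_left hle hk0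
  have hl1 : (ℓ : ℝ)⁻¹ < 1 := inv_lt_one_of_one_lt₀ (by exact_mod_cast hl.out.one_lt)
  by_contra hne
  have := norm_pos_iff.2 hne
  nlinarith

/-- Congruence up to `c` of two integral elements. -/
def Cg {ℓ : ℕ} [Fact ℓ.Prime] (c : ℝ) (x y : ℚ_[ℓ]) : Prop :=
  ‖x - y‖ ≤ c ∧ ‖x‖ ≤ 1 ∧ ‖y‖ ≤ 1

lemma Cg.mul {ℓ : ℕ} [Fact ℓ.Prime] {c : ℝ} {x y x' y' : ℚ_[ℓ]} (h : Cg c x y) (h' : Cg c x' y') :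
    Cg c (x * x') (y * y') := by
  obtain ⟨h1, h2, h3⟩ := h
  obtain ⟨h1', h2', h3'⟩ := h'
  have hc : 0 ≤ c := (norm_nonneg _).trans h1
  refine ⟨?_, ?_, ?_⟩
  · rw [show x * x' - y * y' = x * (x' - y') + (x - y) * y' by ring]
    refine (Padic.nonarchimedean _ _).trans (max_le ?_ ?_)
    · rw [norm_mul]
      exact (mul_le_of_le_one_left (norm_nonneg _) h2).trans h1'
    · rw [norm_mul]
      exact (mul_le_of_le_one_right (norm_nonneg _) h3').trans h1
  · rw [norm_mul]; exact mul_le_one₀ h2 (norm_nonneg _) h2'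
  · rw [norm_mul]; exact mul_le_one₀ h3 (norm_nonneg _) h3'

lemma Cg.prod {ℓ : ℕ} [Fact ℓ.Prime] {c : ℝ} (hc : 0 ≤ c) {ι : Type*} (s : Finset ι)
    (x y : ι → ℚ_[ℓ]) (h : ∀ i, Cg c (x i) (y i)) : Cg c (∏ i ∈ s, x i) (∏ i ∈ s, y i) := by
  classical
  induction s using Finset.induction_on with
  | empty => simp [Cg, hc]
  | insert a s ha ih => rw [Finset.prod_insert ha, Finset.prod_insert ha]; exact (h a).mul ih

lemma aux_basis (ℓ : ℕ) [hl : Fact ℓ.Prime] {W ι : Type*} [Fintype ι] [AddCommMonoid W]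
    [Module ℚ_[ℓ] W] (b : Module.Basis ι ℚ_[ℓ] W) (A : Module.End ℚ_[ℓ] W)
    (hA : ∀ i j, Cg ‖((if ℓ = 2 then 4 else ℓ : ℕ) : ℚ_[ℓ])‖ (b.repr (A (b j)) i)
      (b.repr (b j) i))
    (k : ℕ) (hk : 0 < k) (w : W) (hw : (A ^ k) w = w) : A w = w := by
  set c := ‖((if ℓ = 2 then 4 else ℓ : ℕ) : ℚ_[ℓ])‖ with hc
  have hc0 : 0 ≤ c := norm_nonneg _
  set e := b.equivFun
  set N : Module.End ℚ_[ℓ] (ι → ℚ_[ℓ]) := e.conj A - 1 with hNdef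
  have hN1 : N + 1 = e.conj A := by
    rw [hNdef, sub_add_cancel]
  have key := aux_core ℓ N ?_ k hk (e w) ?_
  · have h2 : e (A w) - e w = 0 := by simpa [hNdef, LinearEquiv.conj_apply] using key
    exact e.injective (sub_eq_zero.1 h2)
  · intro x
    rw [pi_norm_le_iff_of_nonneg (by positivity)]
    intro i
    have hx : N x = ∑ j, x j • (e (A (b j)) - e (b j)) := by
      have h0 : x = e (∑ j, x j • b j) := by
        rw [← b.equivFun_symm_apply x]; exact (e.apply_symm_apply x).symm
      conv_lhs => rw [h0]
      simp only [hNdef, LinearMap.sub_apply, LinearEquiv.conj_apply_apply,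
        LinearEquiv.symm_apply_apply, Module.End.one_apply, map_sum, map_smul, smul_sub,
        Finset.sum_sub_distrib]
    rw [hx, Finset.sum_apply]
    apply IsUltrametricDist.norm_sum_le_of_forall_le_of_nonneg (by positivity)
    intro j _
    rw [Pi.smul_apply, norm_smul, mul_comm]
    apply mul_le_mul _ (norm_le_pi_norm x j) (norm_nonneg _) hc0
    have := (hA i j).1
    simpa [e] using this
  · rw [hN1]
    have : (e.conj A) ^ k = e.conj (A ^ k) := by
      exact (map_pow e.conjRingEquiv A k).symm
    rw [this, LinearEquiv.conj_apply_apply]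
    simp [hw]

lemma tensorAct_mul {F V : Type*} [CommRing F] [AddCommGroup V] [Module F V]
    (f f' g g' : Module.End F V) (a b : ℕ) :
    tensorAct (f * g) (g' * f') a b = (tensorAct f f' a b * tensorAct g g' a b :
      Module.End F (TensorSpace F V a b)) := by
  unfold tensorAct
  rw [← TensorProduct.map_mul, ← PiTensorProduct.map_mul, ← PiTensorProduct.map_mul]
  rfl

lemma tensorAct_pow {F V : Type*} [CommRing F] [AddCommGroup V] [Module F V]
    (f f' : Module.End F V) (a b k : ℕ) :
    tensorAct (f ^ k) (f' ^ k) a b = ((tensorAct f f' a b) ^ k :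
      Module.End F (TensorSpace F V a b)) := by
  induction k with
  | zero =>
    simp only [pow_zero]
    unfold tensorAct
    rw [← TensorProduct.map_one, ← PiTensorProduct.map_one, ← PiTensorProduct.map_one]
    rfl
  | succ k ih => rw [pow_succ f, pow_succ' f', tensorAct_mul, ih, pow_succ]

lemma aux_tensor (ℓ r : ℕ) [hl : Fact ℓ.Prime] (c : ℝ) (hc : 0 ≤ c)
    (M M' : Matrix (Fin r) (Fin r) ℚ_[ℓ])
    (hM : ∀ i j, Cg c (M i j) ((1 : Matrix (Fin r) (Fin r) ℚ_[ℓ]) i j))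
    (hM' : ∀ i j, Cg c (M' i j) ((1 : Matrix (Fin r) (Fin r) ℚ_[ℓ]) i j)) (a b : ℕ) :
    ∃ B : Module.Basis ((Fin a → Fin r) × (Fin b → Fin r)) ℚ_[ℓ]
      (TensorSpace ℚ_[ℓ] (Fin r → ℚ_[ℓ]) a b),
      ∀ i j, Cg c (B.repr (tensorAct (Matrix.toLin' M) (Matrix.toLin' M') a b (B j)) i)
        (B.repr (B j) i) := by
  let B1 : Module.Basis (Fin a → Fin r) ℚ_[ℓ] (TensorPower ℚ_[ℓ] a (Fin r → ℚ_[ℓ])) :=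
    Basis.piTensorProduct fun _ : Fin a => Pi.basisFun ℚ_[ℓ] (Fin r)
  let B2 : Module.Basis (Fin b → Fin r) ℚ_[ℓ]
      (TensorPower ℚ_[ℓ] b (Module.Dual ℚ_[ℓ] (Fin r → ℚ_[ℓ]))) :=
    Basis.piTensorProduct fun _ : Fin b => (Pi.basisFun ℚ_[ℓ] (Fin r)).dualBasis
  refine ⟨B1.tensorProduct B2, ?_⟩
  rintro ⟨i1, i2⟩ ⟨j1, j2⟩
  rw [Module.Basis.tensorProduct_apply, tensorAct, TensorProduct.map_tmul,
    Module.Basis.tensorProduct_repr_tmul_apply, Module.Basis.tensorProduct_repr_tmul_apply]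
  simp only [smul_eq_mul]
  apply Cg.mul
  · simp only [B2]
    rw [Basis.piTensorProduct_apply, PiTensorProduct.map_tprod,
      Basis.piTensorProduct_repr_tprod_apply, Basis.piTensorProduct_repr_tprod_apply]
    apply Cg.prod hc
    intro i
    convert hM' (j2 i) (i2 i) using 1
    · simp [Module.Basis.dualBasis_repr]
    · simp [Module.Basis.dualBasis_repr, Matrix.one_apply, Pi.single_apply]
  · simp only [B1]
    rw [Basis.piTensorProduct_apply, PiTensorProduct.map_tprod,
      Basis.piTensorProduct_repr_tprod_apply, Basis.piTensorProduct_repr_tprod_apply]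
    apply Cg.prod hc
    intro i
    convert hM (i1 i) (j1 i) using 1
    · simp
    · simp [Matrix.one_apply, Pi.single_apply]

lemma aux_cg (ℓ r : ℕ) [hl : Fact ℓ.Prime] (g : GL (Fin r) ℤ_[ℓ])
    (htriv : ∀ i j : Fin r,
      ((g : Matrix (Fin r) (Fin r) ℤ_[ℓ]) - 1) i j ∈
        Ideal.span {((if ℓ = 2 then 4 else ℓ : ℕ) : ℤ_[ℓ])}) (i j : Fin r) :
    Cg ‖((if ℓ = 2 then 4 else ℓ : ℕ) : ℚ_[ℓ])‖
      ((glPadicIncl ℓ r g : Matrix (Fin r) (Fin r) ℚ_[ℓ]) i j)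
      ((1 : Matrix (Fin r) (Fin r) ℚ_[ℓ]) i j) := by
  have he : (glPadicIncl ℓ r g : Matrix (Fin r) (Fin r) ℚ_[ℓ]) i j =
    (((g : Matrix (Fin r) (Fin r) ℤ_[ℓ]) i j : ℤ_[ℓ]) : ℚ_[ℓ]) := rfl
  have h1 : (1 : Matrix (Fin r) (Fin r) ℚ_[ℓ]) i j =
    (((1 : Matrix (Fin r) (Fin r) ℤ_[ℓ]) i j : ℤ_[ℓ]) : ℚ_[ℓ]) := by
    rw [Matrix.one_apply, Matrix.one_apply]; split_ifs <;> simp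
  rw [he, h1]
  refine ⟨?_, PadicInt.norm_le_one _, PadicInt.norm_le_one _⟩
  obtain ⟨t, ht⟩ := Ideal.mem_span_singleton'.1 (htriv i j)
  rw [← PadicInt.coe_sub, ← Matrix.sub_apply, ← ht, PadicInt.coe_mul, PadicInt.coe_natCast,
    norm_mul]
  exact mul_le_of_le_one_left (norm_nonneg _) (PadicInt.norm_le_one _)

lemma aux_main (ℓ r : ℕ) [hl : Fact ℓ.Prime] (M M' : Matrix (Fin r) (Fin r) ℚ_[ℓ])
    (hM : ∀ i j, Cg ‖((if ℓ = 2 then 4 else ℓ : ℕ) : ℚ_[ℓ])‖ (M i j)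
      ((1 : Matrix (Fin r) (Fin r) ℚ_[ℓ]) i j))
    (hM' : ∀ i j, Cg ‖((if ℓ = 2 then 4 else ℓ : ℕ) : ℚ_[ℓ])‖ (M' i j)
      ((1 : Matrix (Fin r) (Fin r) ℚ_[ℓ]) i j)) (a b k : ℕ) (hk : 0 < k)
    (w : TensorSpace ℚ_[ℓ] (Fin r → ℚ_[ℓ]) a b)
    (hw : tensorAct (Matrix.toLin' (M ^ k)) (Matrix.toLin' (M' ^ k)) a b w = w) :
    tensorAct (Matrix.toLin' M) (Matrix.toLin' M') a b w = w := by
  rw [Matrix.toLin'_pow, Matrix.toLin'_pow, tensorAct_pow] at hw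
  have hT := aux_tensor ℓ r _ (norm_nonneg _) _ _ hM hM' a b
  clear hM hM'
  generalize tensorAct (Matrix.toLin' M) (Matrix.toLin' M') a b = A at *
  exact hT.elim fun B hB => aux_basis ℓ B A hB k hk w hw

/-- Let `ℓ` be a prime, `T` a free `ℤ_ℓ`-module of finite rank `r`, and
`P ⊆ GL(T)` a closed subgroup whose Zariski closure `G` in `GL(T ⊗ ℚ_ℓ)` is reductive
(reductivity being expressed, as is equivalent in characteristic zero, by semisimplicity of
the standard module `T ⊗ ℚ_ℓ` over `P`). Set `s_ℓ = ℓ` for `ℓ ≠ 2` and `s_ℓ = 4` for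
`ℓ = 2`. If `P` acts trivially on `T/s_ℓT`, then for all `n, m ≥ 0` and every open finite
index subgroup `U ⊆ P`, the `U`-invariants of `T^{⊗n} ⊗ (T^∨)^{⊗m} ⊗ ℚ_ℓ` coincide with the
`P`-invariants. -/
theorem tensor_invariants_open_subgroup
    (ℓ r : ℕ) [Fact ℓ.Prime]
    (P : Subgroup (GL (Fin r) ℤ_[ℓ])) (hPcl : IsClosed (P : Set (GL (Fin r) ℤ_[ℓ])))
    (hred : IsSemisimpleModule (MonoidAlgebra ℚ_[ℓ] P)
      (Representation.asModule (glRep ((glPadicIncl ℓ r).comp P.subtype))))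
    (htriv : ∀ g ∈ P, ∀ i j : Fin r,
      ((g : Matrix (Fin r) (Fin r) ℤ_[ℓ]) - 1) i j ∈
        Ideal.span {((if ℓ = 2 then 4 else ℓ : ℕ) : ℤ_[ℓ])}) :
    ∀ (n m : ℕ) (U : Subgroup P), IsOpen (U : Set P) → U.index ≠ 0 →
      ∀ w : TensorSpace ℚ_[ℓ] (Fin r → ℚ_[ℓ]) n m,
        (∀ u ∈ U, tensorAct
            (Matrix.toLin' ((((glPadicIncl ℓ r).comp P.subtype) u : GL (Fin r) ℚ_[ℓ]) :
              Matrix (Fin r) (Fin r) ℚ_[ℓ]))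
            (Matrix.toLin' (((((glPadicIncl ℓ r).comp P.subtype) u)⁻¹ : GL (Fin r) ℚ_[ℓ]) :
              Matrix (Fin r) (Fin r) ℚ_[ℓ])) n m w = w) →
        ∀ g : P, tensorAct
            (Matrix.toLin' ((((glPadicIncl ℓ r).comp P.subtype) g : GL (Fin r) ℚ_[ℓ]) :
              Matrix (Fin r) (Fin r) ℚ_[ℓ]))
            (Matrix.toLin' (((((glPadicIncl ℓ r).comp P.subtype) g)⁻¹ : GL (Fin r) ℚ_[ℓ]) :
              Matrix (Fin r) (Fin r) ℚ_[ℓ])) n m w = w := by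
  intro a b U _ hU w hw g
  obtain ⟨k, hk, hkU⟩ : ∃ k : ℕ, 0 < k ∧ g ^ k ∈ U := by
    obtain ⟨k, hk, -, h⟩ := Subgroup.exists_pow_mem_of_index_ne_zero hU g
    exact ⟨k, hk, h⟩
  have hM := aux_cg ℓ r (g : GL (Fin r) ℤ_[ℓ]) (htriv _ g.2)
  have hM' := aux_cg ℓ r ((g : GL (Fin r) ℤ_[ℓ])⁻¹) (htriv _ (inv_mem g.2))
  rw [map_inv] at hM'
  have h := hw _ hkU
  clear hw htriv hred
  rw [map_pow, ← inv_pow, Units.val_pow_eq_pow_val, Units.val_pow_eq_pow_val] at h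
  rw [MonoidHom.comp_apply, Subgroup.coe_subtype] at h ⊢
  exact aux_main ℓ r _ _ hM hM' a b k hk w h
end
end

section
/- Let ℓ be a prime and s_ℓ = ℓ if ℓ ≠ 2, s_ℓ = 4 if ℓ = 2. Let T be a free ℤ_ℓ-module of rank r and Π ⊆ GL(T) a closed subgroup. Then the number of connected components of the Zariski closure G of Π in GL(T ⊗ ℚ_ℓ) is at most |GL_r(ℤ/s_ℓ)|. -/
noncomputable section
open Matrix

variable {n : Type*} [Fintype n] [DecidableEq n] {K : Type*} [CommRing K]

/-- sequences given by power series with absolutely summable coefficients -/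
def ZGood (ℓ : ℕ) [Fact ℓ.Prime] (f : ℕ → ℚ_[ℓ]) : Prop :=
  ∃ F : PowerSeries ℚ_[ℓ], Summable (fun k => ‖PowerSeries.coeff k F‖) ∧
    ∀ n : ℕ, f n = ∑' k, PowerSeries.coeff k F * (n : ℚ_[ℓ]) ^ k

section good
variable {ℓ : ℕ} [Fact ℓ.Prime]

lemma norm_nat_le_one (n : ℕ) : ‖(n : ℚ_[ℓ])‖ ≤ 1 := by
  simpa using Padic.norm_int_le_one (p := ℓ) (n : ℤ)

lemma summable_norm_term {F : PowerSeries ℚ_[ℓ]} (hF : Summable (fun k => ‖PowerSeries.coeff k F‖))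
    (n : ℕ) : Summable (fun k => ‖PowerSeries.coeff k F * (n : ℚ_[ℓ]) ^ k‖) := by
  refine Summable.of_nonneg_of_le (fun _ => norm_nonneg _) (fun k => ?_) hF
  rw [norm_mul, norm_pow]
  exact mul_le_of_le_one_right (norm_nonneg _) (pow_le_one₀ (norm_nonneg _) (norm_nat_le_one n))

lemma ZGood.const (c : ℚ_[ℓ]) : ZGood ℓ (fun _ => c) := by
  refine ⟨PowerSeries.C c, ?_, fun n => ?_⟩
  · refine summable_of_ne_finset_zero (s := {0}) fun k hk => ?_
    simp at hk
    simp [PowerSeries.coeff_C, hk]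
  · rw [tsum_eq_single 0]
    · simp
    · intro k hk
      simp [PowerSeries.coeff_C, hk]

lemma ZGood.add {f h : ℕ → ℚ_[ℓ]} (hf : ZGood ℓ f) (hh : ZGood ℓ h) :
    ZGood ℓ (fun n => f n + h n) := by
  obtain ⟨F, hF, hf⟩ := hf
  obtain ⟨H, hH, hh⟩ := hh
  refine ⟨F + H, ?_, fun n => ?_⟩
  · refine Summable.of_nonneg_of_le (fun _ => norm_nonneg _) (fun k => ?_) (hF.add hH)
    rw [map_add]; exact norm_add_le _ _
  · beta_reduce
    rw [hf, hh, ← Summable.tsum_add (summable_norm_term hF n).of_norm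
      (summable_norm_term hH n).of_norm]
    simp [add_mul]

lemma mul_term (F H : PowerSeries ℚ_[ℓ]) (x : ℚ_[ℓ]) (k : ℕ) :
    PowerSeries.coeff k (F * H) * x ^ k = ∑ kl ∈ Finset.HasAntidiagonal.antidiagonal k,
      (PowerSeries.coeff kl.1 F * x ^ kl.1) * (PowerSeries.coeff kl.2 H * x ^ kl.2) := by
  rw [PowerSeries.coeff_mul, Finset.sum_mul]
  refine Finset.sum_congr rfl fun kl hkl => ?_
  rw [← Finset.HasAntidiagonal.mem_antidiagonal.1 hkl, pow_add]; ring

lemma mul_good {F H : PowerSeries ℚ_[ℓ]} (hF : Summable (fun k => ‖PowerSeries.coeff k F‖))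
    (hH : Summable (fun k => ‖PowerSeries.coeff k H‖)) :
    Summable (fun k => ‖PowerSeries.coeff k (F * H)‖) ∧ ∀ n : ℕ,
    (∑' k, PowerSeries.coeff k F * (n : ℚ_[ℓ]) ^ k) * (∑' k, PowerSeries.coeff k H * (n : ℚ_[ℓ]) ^ k)
      = ∑' k, PowerSeries.coeff k (F * H) * (n : ℚ_[ℓ]) ^ k := by
  constructor
  · simp_rw [PowerSeries.coeff_mul]
    exact summable_norm_sum_mul_antidiagonal_of_summable_norm
      (f := fun k => PowerSeries.coeff k F) (g := fun k => PowerSeries.coeff k H) hF hH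
  · intro n
    rw [tsum_congr (mul_term F H (n : ℚ_[ℓ]))]
    exact tsum_mul_tsum_eq_tsum_sum_antidiagonal_of_summable_norm
      (f := fun k => PowerSeries.coeff k F * (n : ℚ_[ℓ]) ^ k)
      (g := fun k => PowerSeries.coeff k H * (n : ℚ_[ℓ]) ^ k) (summable_norm_term hF n)
      (summable_norm_term hH n)

lemma ZGood.mul {f h : ℕ → ℚ_[ℓ]} (hf : ZGood ℓ f) (hh : ZGood ℓ h) :
    ZGood ℓ (fun n => f n * h n) := by
  obtain ⟨F, hF, hf⟩ := hf
  obtain ⟨H, hH, hh⟩ := hh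
  refine ⟨F * H, (mul_good hF hH).1, fun n => ?_⟩
  beta_reduce
  rw [hf, hh, (mul_good hF hH).2]

lemma series_eq_zero {F : PowerSeries ℚ_[ℓ]} (hF : Summable (fun k => ‖PowerSeries.coeff k F‖))
    (h0 : ∀ n : ℕ, ∑' k, PowerSeries.coeff k F * (n : ℚ_[ℓ]) ^ k = 0) : F = 0 := by
  ext m
  induction m using Nat.strong_induction_on with
  | _ m ih =>
  rw [map_zero]
  set C := ∑' k, ‖PowerSeries.coeff k F‖ with hC
  have hp : (1 : ℝ) < ℓ := by exact_mod_cast (Fact.out : ℓ.Prime).one_lt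
  have hp0 : (ℓ : ℚ_[ℓ]) ≠ 0 := by exact_mod_cast (Fact.out : ℓ.Prime).ne_zero
  have key : ∀ N : ℕ, ‖PowerSeries.coeff m F‖ ≤ C * ((ℓ : ℝ)⁻¹) ^ N := by
    intro N
    have h1 := h0 (ℓ ^ N)
    have hs := (summable_norm_term hF (ℓ ^ N)).of_norm
    rw [← hs.sum_add_tsum_nat_add (m + 1), Finset.sum_range_succ, Finset.sum_eq_zero (fun k hk => by
      rw [ih k (Finset.mem_range.1 hk)]; simp), zero_add] at h1
    set x : ℚ_[ℓ] := ((ℓ ^ N : ℕ) : ℚ_[ℓ]) with hx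
    have hxn : ‖x‖ = ((ℓ : ℝ)⁻¹) ^ N := by rw [hx]; push_cast; rw [norm_pow, Padic.norm_p]
    have hx0 : x ≠ 0 := by rw [hx]; push_cast; exact pow_ne_zero _ hp0
    have h2 : PowerSeries.coeff m F = -∑' k, PowerSeries.coeff (k + (m + 1)) F * x ^ (k + 1) := by
      have : ∀ k, PowerSeries.coeff (k + (m + 1)) F * x ^ (k + (m + 1)) =
          (PowerSeries.coeff (k + (m + 1)) F * x ^ (k + 1)) * x ^ m := fun k => by ring
      simp_rw [this] at h1
      rw [tsum_mul_right, ← add_mul] at h1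
      have := (mul_eq_zero.1 h1).resolve_right (pow_ne_zero _ hx0)
      exact eq_neg_of_add_eq_zero_left this
    rw [h2, norm_neg, ← hxn]
    have hs' : Summable fun k => ‖PowerSeries.coeff (k + (m + 1)) F‖ * ‖x‖ :=
      ((summable_nat_add_iff (m + 1)).2 hF).mul_right _
    refine (tsum_of_norm_bounded hs'.hasSum (fun k => ?_)).trans ?_
    · rw [norm_mul, norm_pow]
      gcongr
      rw [pow_succ]
      exact mul_le_of_le_one_left (norm_nonneg _) (pow_le_one₀ (norm_nonneg _) (norm_nat_le_one _))
    · rw [tsum_mul_right]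
      gcongr
      rw [hC, ← hF.sum_add_tsum_nat_add (m + 1)]
      exact le_add_of_nonneg_left (Finset.sum_nonneg fun _ _ => norm_nonneg _)
  have hlim : Filter.Tendsto (fun N : ℕ => C * ((ℓ : ℝ)⁻¹) ^ N) Filter.atTop (nhds (C * 0)) :=
    (tendsto_pow_atTop_nhds_zero_of_lt_one (by positivity) (inv_lt_one_of_one_lt₀ hp)).const_mul _
  rw [mul_zero] at hlim
  exact norm_le_zero_iff.1 (ge_of_tendsto' hlim key)

lemma ZGood.domain {f h : ℕ → ℚ_[ℓ]} (hf : ZGood ℓ f) (hh : ZGood ℓ h)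
    (h0 : ∀ n, f n * h n = 0) : (∀ n, f n = 0) ∨ (∀ n, h n = 0) := by
  obtain ⟨F, hF, hf⟩ := hf
  obtain ⟨H, hH, hh⟩ := hh
  have := series_eq_zero (mul_good hF hH).1 (fun n => by
    rw [← (mul_good hF hH).2, ← hf, ← hh, h0])
  rcases mul_eq_zero.1 this with h | h
  · left; intro n; rw [hf, h]; simp
  · right; intro n; rw [hh, h]; simp

lemma ZGood.mvPoly {σ : Type*} (x : ℕ → σ → ℚ_[ℓ]) (hx : ∀ i, ZGood ℓ (fun n => x n i))
    (p : MvPolynomial σ ℚ_[ℓ]) : ZGood ℓ (fun n => MvPolynomial.eval (x n) p) := by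
  induction p using MvPolynomial.induction_on with
  | C a => simpa using ZGood.const a
  | add p q hp hq => simpa using hp.add hq
  | mul_X p i hp => simpa using hp.mul (hx i)

/-- exponent of `s_ℓ` -/
def sExp (ℓ : ℕ) : ℕ := if ℓ = 2 then 2 else 1

lemma val_bound (k : ℕ) : 2 * padicValNat ℓ (k.factorial) + k ≤ 2 * (sExp ℓ * k) := by
  have h := sub_one_mul_padicValNat_factorial (p := ℓ) k
  have hl := (Fact.out : ℓ.Prime).two_le
  unfold sExp
  split_ifs with h2
  · subst h2
    simp at h
    omega
  · have h3 : 2 ≤ ℓ - 1 := by omega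
    have := Nat.mul_le_mul_right (padicValNat ℓ k.factorial) h3
    omega

lemma b_bound (k : ℕ) :
    ‖((ℓ : ℚ_[ℓ]) ^ (sExp ℓ * k)) / (k.factorial : ℚ_[ℓ])‖ ≤ (9/10 : ℝ) ^ k * (9/10 : ℝ) ^ k := by
  have hp2 : (2 : ℝ) ≤ ℓ := by exact_mod_cast (Fact.out : ℓ.Prime).two_le
  have hp0 : (ℓ : ℝ) ≠ 0 := by positivity
  have hk : ((k.factorial : ℕ) : ℚ_[ℓ]) ≠ 0 := by exact_mod_cast k.factorial_ne_zero
  have hn : ‖((ℓ : ℚ_[ℓ]) ^ (sExp ℓ * k)) / (k.factorial : ℚ_[ℓ])‖ =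
      ((ℓ : ℝ)⁻¹) ^ (sExp ℓ * k) * (ℓ : ℝ) ^ (padicValNat ℓ k.factorial) := by
    rw [norm_div, norm_pow, Padic.norm_p, Padic.norm_eq_zpow_neg_valuation hk,
      Padic.valuation_natCast, _root_.zpow_neg, div_inv_eq_mul, zpow_natCast]
  rw [hn, ← sq_le_sq₀ (by positivity) (by positivity)]
  obtain ⟨d, hd⟩ := Nat.exists_eq_add_of_le (val_bound (ℓ := ℓ) k)
  have hinv : (ℓ : ℝ)⁻¹ ≤ 1 / 2 := by
    rw [one_div]; exact inv_anti₀ (by norm_num) hp2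
  calc (((ℓ : ℝ)⁻¹) ^ (sExp ℓ * k) * (ℓ : ℝ) ^ (padicValNat ℓ k.factorial)) ^ 2
      = ((ℓ : ℝ)⁻¹) ^ (2 * (sExp ℓ * k)) * (ℓ : ℝ) ^ (2 * padicValNat ℓ k.factorial) := by ring
    _ = ((ℓ : ℝ)⁻¹ * ℓ) ^ (2 * padicValNat ℓ k.factorial) * (((ℓ : ℝ)⁻¹) ^ k * ((ℓ : ℝ)⁻¹) ^ d) := by
        rw [hd, pow_add, pow_add, mul_pow]; ring
    _ = ((ℓ : ℝ)⁻¹) ^ k * ((ℓ : ℝ)⁻¹) ^ d := by rw [inv_mul_cancel₀ hp0]; simp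
    _ ≤ ((ℓ : ℝ)⁻¹) ^ k := by
        refine mul_le_of_le_one_right (by positivity) (pow_le_one₀ (by positivity) ?_)
        linarith
    _ ≤ ((9/10 : ℝ) ^ 4) ^ k := by
        gcongr
        exact hinv.trans (by norm_num)
    _ = _ := by rw [← pow_mul, ← pow_add, ← pow_mul]; congr 1; ring

lemma good_binom (c : ℕ → ℚ_[ℓ]) (hc : ∀ k, ‖c k‖ ≤ 1) :
    ZGood ℓ (fun n => ∑ k ∈ Finset.range (n + 1),
      (ℓ : ℚ_[ℓ]) ^ (sExp ℓ * k) * c k * (n.choose k : ℚ_[ℓ])) := by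
  set b : ℕ → ℚ_[ℓ] := fun k => ((ℓ : ℚ_[ℓ]) ^ (sExp ℓ * k)) / (k.factorial : ℚ_[ℓ]) with hb
  set G : ℕ → ℕ → ℚ_[ℓ] := fun k j => b k * c k * (((descPochhammer ℤ k).coeff j : ℤ) : ℚ_[ℓ]) with hG
  set ρ : ℝ := 9/10 with hρ
  have hGb : ∀ k j, ‖G k j‖ ≤ ρ ^ k * ρ ^ j := by
    intro k j
    by_cases hjk : j ≤ k
    · simp only [hG]
      rw [norm_mul, norm_mul]
      calc _ ≤ ‖b k‖ * 1 * 1 := by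
            gcongr
            · exact hc k
            · exact Padic.norm_int_le_one (p := ℓ) _
        _ ≤ ρ ^ k * ρ ^ k := by rw [mul_one, mul_one]; exact b_bound (ℓ := ℓ) k
        _ ≤ _ := by
            gcongr ?_ * ?_
            exact pow_le_pow_of_le_one (by norm_num [hρ]) (by norm_num [hρ]) hjk
    · simp only [hG]
      rw [Polynomial.coeff_eq_zero_of_natDegree_lt]
      · simp; positivity
      · rw [descPochhammer_natDegree]; omega
  have hgeo : Summable (fun k : ℕ => ρ ^ k) :=
    summable_geometric_of_lt_one (by norm_num [hρ]) (by norm_num [hρ])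
  have hgeo2 : Summable (fun q : ℕ × ℕ => ρ ^ q.1 * ρ ^ q.2) :=
    hgeo.mul_of_nonneg hgeo (fun _ => by positivity) (fun _ => by positivity)
  refine ⟨PowerSeries.mk fun j => ∑' k, G k j, ?_, fun n => ?_⟩
  · simp only [PowerSeries.coeff_mk]
    refine Summable.of_nonneg_of_le (fun _ => norm_nonneg _) (fun j => ?_)
      (hgeo.mul_left (∑' k : ℕ, ρ ^ k))
    rw [← tsum_mul_right]
    exact tsum_of_norm_bounded (hgeo.mul_right _).hasSum (fun k => hGb k j)
  · simp only [PowerSeries.coeff_mk]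
    simp_rw [← tsum_mul_right]
    have hsum : Summable (Function.uncurry fun k j => G k j * (n : ℚ_[ℓ]) ^ j) := by
      refine Summable.of_norm_bounded hgeo2 (fun q => ?_)
      simp only [Function.uncurry]
      rw [norm_mul, norm_pow]
      exact (mul_le_of_le_one_right (norm_nonneg _)
        (pow_le_one₀ (norm_nonneg _) (norm_nat_le_one n))).trans (hGb _ _)
    rw [hsum.tsum_comm]
    have inner : ∀ k, ∑' j, G k j * (n : ℚ_[ℓ]) ^ j =
        (ℓ : ℚ_[ℓ]) ^ (sExp ℓ * k) * c k * (n.choose k : ℚ_[ℓ]) := by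
      intro k
      have hk : ((k.factorial : ℕ) : ℚ_[ℓ]) ≠ 0 := by exact_mod_cast k.factorial_ne_zero
      have e : (n.descFactorial k : ℤ) = ∑ j ∈ Finset.range (k + 1),
          (descPochhammer ℤ k).coeff j * (n : ℤ) ^ j := by
        rw [← descPochhammer_eval_eq_descFactorial, Polynomial.eval_eq_sum_range,
          descPochhammer_natDegree]
      rw [tsum_eq_sum (s := Finset.range (k + 1))]
      · have e' := congrArg (Int.cast : ℤ → ℚ_[ℓ]) e
        push_cast at e'
        rw [Nat.descFactorial_eq_factorial_mul_choose] at e'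
        push_cast at e'
        simp only [hG, mul_assoc]
        rw [← Finset.mul_sum, ← Finset.mul_sum, ← e', hb]
        field_simp
      · intro j hj
        simp only [hG]
        rw [Polynomial.coeff_eq_zero_of_natDegree_lt]
        · simp
        · rw [descPochhammer_natDegree]; simp at hj; omega
    simp_rw [inner]
    rw [tsum_eq_sum (s := Finset.range (n + 1))]
    intro k hk
    rw [Nat.choose_eq_zero_of_lt (by simp at hk; omega)]
    simp

lemma good_pow {r : ℕ} (A : Matrix (Fin r) (Fin r) ℤ_[ℓ]) (i j : Fin r) :
    ZGood ℓ (fun n => ((((1 + (ℓ : ℤ_[ℓ]) ^ sExp ℓ • A) ^ n) i j : ℤ_[ℓ]) : ℚ_[ℓ])) := by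
  convert good_binom (ℓ := ℓ) (fun k => (((A ^ k) i j : ℤ_[ℓ]) : ℚ_[ℓ]))
    (fun k => PadicInt.norm_le_one _) using 2 with n
  have e : (1 + (ℓ : ℤ_[ℓ]) ^ sExp ℓ • A) ^ n = ∑ k ∈ Finset.range (n + 1),
      ((ℓ : ℤ_[ℓ]) ^ (sExp ℓ * k) * (n.choose k : ℤ_[ℓ])) • A ^ k := by
    rw [add_comm, (Commute.one_right _).add_pow]
    refine Finset.sum_congr rfl fun k _ => ?_
    rw [one_pow, mul_one, smul_pow, ← nsmul_eq_mul', ← Nat.cast_smul_eq_nsmul ℤ_[ℓ], smul_smul,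
      pow_mul, mul_comm]
  rw [e, Matrix.sum_apply, PadicInt.coe_sum]
  refine Finset.sum_congr rfl fun k _ => ?_
  rw [Matrix.smul_apply]
  simp
  ring

end good

section topo

/-- topology on `ℕ` whose basic opens are nonvanishing loci of good sequences -/
def natTop (ℓ : ℕ) [Fact ℓ.Prime] : TopologicalSpace ℕ where
  IsOpen U := ∀ a ∈ U, ∃ f, ZGood ℓ f ∧ f a ≠ 0 ∧ ∀ n, f n ≠ 0 → n ∈ U
  isOpen_univ := fun a _ => ⟨fun _ => 1, ZGood.const 1, one_ne_zero, fun _ _ => trivial⟩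
  isOpen_inter := by
    rintro U V hU hV a ⟨haU, haV⟩
    obtain ⟨f, hf, hfa, hfU⟩ := hU a haU
    obtain ⟨h, hh, hha, hhV⟩ := hV a haV
    exact ⟨_, hf.mul hh, mul_ne_zero hfa hha, fun n hn =>
      ⟨hfU n (left_ne_zero_of_mul hn), hhV n (right_ne_zero_of_mul hn)⟩⟩
  isOpen_sUnion := by
    rintro S hS a ⟨U, hU, ha⟩
    obtain ⟨f, hf, hfa, hfU⟩ := hS U hU a ha
    exact ⟨f, hf, hfa, fun n hn => ⟨U, hU, hfU n hn⟩⟩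

lemma natTop_preconnected (ℓ : ℕ) [Fact ℓ.Prime] :
    @IsPreconnected ℕ (natTop ℓ) Set.univ := by
  letI := natTop ℓ
  apply IsPreirreducible.isPreconnected
  rintro U V hU hV ⟨a, -, ha⟩ ⟨b, -, hb⟩
  obtain ⟨f, hf, hfa, hfU⟩ := hU a ha
  obtain ⟨h, hh, hhb, hhV⟩ := hV b hb
  by_contra hcon
  have : ∀ n, f n * h n = 0 := by
    intro n
    by_contra hn
    exact hcon ⟨n, trivial, hfU n (left_ne_zero_of_mul hn), hhV n (right_ne_zero_of_mul hn)⟩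
  rcases hf.domain hh this with h0 | h0
  · exact hfa (h0 a)
  · exact hhb (h0 b)

lemma natTop_continuous_mat {ℓ r : ℕ} [Fact ℓ.Prime] (x : ℕ → Matrix (Fin r) (Fin r) ℚ_[ℓ])
    (hx : ∀ i j, ZGood ℓ (fun n => x n i j)) :
    @Continuous _ _ (natTop ℓ) (zariskiMat (Fin r) ℚ_[ℓ]) x := by
  letI := natTop ℓ
  refine continuous_generateFrom_iff.2 ?_
  rintro _ ⟨p, rfl⟩
  intro a ha
  exact ⟨_, ZGood.mvPoly (fun n (q : Fin r × Fin r) => x n q.1 q.2) (fun q => hx q.1 q.2) p, ha,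
    fun n hn => hn⟩

lemma zariskiMat_continuous {r : ℕ} {K : Type*} [CommRing K]
    (x : Matrix (Fin r) (Fin r) K → Matrix (Fin r) (Fin r) K)
    (P : Fin r × Fin r → MvPolynomial (Fin r × Fin r) K)
    (hx : ∀ M i j, x M i j = MvPolynomial.eval (fun q => M q.1 q.2) (P (i, j))) :
    @Continuous _ _ (zariskiMat (Fin r) K) (zariskiMat (Fin r) K) x := by
  letI := zariskiMat (Fin r) K
  refine continuous_generateFrom_iff.2 ?_
  rintro _ ⟨p, rfl⟩
  refine TopologicalSpace.isOpen_generateFrom_of_mem ⟨MvPolynomial.bind₁ P p, ?_⟩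
  ext M
  have e : MvPolynomial.eval (fun q : Fin r × Fin r => M q.1 q.2) (MvPolynomial.bind₁ P p) =
      MvPolynomial.eval (fun q : Fin r × Fin r => x M q.1 q.2) p := by
    have hx' : (fun q : Fin r × Fin r => x M q.1 q.2) =
        fun q => MvPolynomial.eval (fun q : Fin r × Fin r => M q.1 q.2) (P q) :=
      funext fun q => hx M q.1 q.2
    rw [hx']
    exact MvPolynomial.eval₂Hom_bind₁ _ _ _ _
  change MvPolynomial.eval (fun q : Fin r × Fin r => x M q.1 q.2) p ≠ 0 ↔
    MvPolynomial.eval (fun q : Fin r × Fin r => M q.1 q.2) (MvPolynomial.bind₁ P p) ≠ 0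
  rw [e]

lemma zariskiMat_mul_left {r : ℕ} {K : Type*} [CommRing K] (A : Matrix (Fin r) (Fin r) K) :
    @Continuous _ _ (zariskiMat (Fin r) K) (zariskiMat (Fin r) K) (fun M => A * M) := by
  refine zariskiMat_continuous _
    (fun q => ∑ k, MvPolynomial.C (A q.1 k) * MvPolynomial.X (k, q.2)) fun M i j => ?_
  simp [Matrix.mul_apply]

lemma zariskiMat_mul_right {r : ℕ} {K : Type*} [CommRing K] (A : Matrix (Fin r) (Fin r) K) :
    @Continuous _ _ (zariskiMat (Fin r) K) (zariskiMat (Fin r) K) (fun M => M * A) := by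
  refine zariskiMat_continuous _
    (fun q => ∑ k, MvPolynomial.X (q.1, k) * MvPolynomial.C (A k q.2)) fun M i j => ?_
  simp [Matrix.mul_apply]

lemma zariskiGL_mul_left {r : ℕ} {K : Type*} [CommRing K] (g : GL (Fin r) K) :
    @Continuous _ _ (zariskiGL (Fin r) K) (zariskiGL (Fin r) K) (fun x => g * x) := by
  letI t1 := zariskiMat (Fin r) K
  letI t2 := zariskiGL (Fin r) K
  have hi : Continuous (fun x : GL (Fin r) K => ((x : Matrix (Fin r) (Fin r) K),
    ((x⁻¹ : GL (Fin r) K) : Matrix (Fin r) (Fin r) K))) := continuous_induced_dom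
  refine continuous_induced_rng.2 ?_
  have h1 := (zariskiMat_mul_left (g : Matrix (Fin r) (Fin r) K)).comp (continuous_fst.comp hi)
  have h2 := (zariskiMat_mul_right ((g⁻¹ : GL (Fin r) K) : Matrix (Fin r) (Fin r) K)).comp
    (continuous_snd.comp hi)
  convert h1.prodMk h2 using 2 with x
  simp [Function.comp]

/-- the embedding of `GL_r(ℤ_ℓ)` in `GL_r(ℚ_ℓ)` -/
abbrev glPhi (ℓ r : ℕ) [Fact ℓ.Prime] : GL (Fin r) ℤ_[ℓ] →* GL (Fin r) ℚ_[ℓ] :=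
  (Units.map (((PadicInt.Coe.ringHom (p := ℓ)).mapMatrix :
          Matrix (Fin r) (Fin r) ℤ_[ℓ] →+* Matrix (Fin r) (Fin r) ℚ_[ℓ])).toMonoidHom :
        GL (Fin r) ℤ_[ℓ] →* GL (Fin r) ℚ_[ℓ])

/-- reduction modulo `s_ℓ` -/
abbrev glRed (ℓ r : ℕ) [Fact ℓ.Prime] : GL (Fin r) ℤ_[ℓ] →* GL (Fin r) (ZMod (ℓ ^ sExp ℓ)) :=
  Matrix.GeneralLinearGroup.map (PadicInt.toZModPow (sExp ℓ))

lemma good_of_ker {ℓ r : ℕ} [Fact ℓ.Prime] (g : GL (Fin r) ℤ_[ℓ]) (hg : glRed ℓ r g = 1)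
    (i j : Fin r) :
    ZGood ℓ (fun n => ((glPhi ℓ r (g ^ n) : GL (Fin r) ℚ_[ℓ]) : Matrix (Fin r) (Fin r) ℚ_[ℓ]) i j) := by
  have h1 : ∀ i j, ∃ a : ℤ_[ℓ], (g : Matrix (Fin r) (Fin r) ℤ_[ℓ]) i j
      = (1 : Matrix (Fin r) (Fin r) ℤ_[ℓ]) i j + (ℓ : ℤ_[ℓ]) ^ sExp ℓ * a := by
    intro i j
    have h2 : PadicInt.toZModPow (sExp ℓ) ((g : Matrix (Fin r) (Fin r) ℤ_[ℓ]) i j) =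
        (1 : Matrix (Fin r) (Fin r) (ZMod (ℓ ^ sExp ℓ))) i j := by
      rw [← Matrix.GeneralLinearGroup.map_apply]
      change (glRed ℓ r g : Matrix (Fin r) (Fin r) (ZMod (ℓ ^ sExp ℓ))) i j = _
      rw [hg]; rfl
    have h3 : (g : Matrix (Fin r) (Fin r) ℤ_[ℓ]) i j - (1 : Matrix (Fin r) (Fin r) ℤ_[ℓ]) i j ∈
        RingHom.ker (PadicInt.toZModPow (p := ℓ) (sExp ℓ)) := by
      rw [RingHom.mem_ker, map_sub, h2, Matrix.one_apply, Matrix.one_apply]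
      split_ifs <;> simp
    rw [PadicInt.ker_toZModPow, Ideal.mem_span_singleton] at h3
    obtain ⟨a, ha⟩ := h3
    exact ⟨a, by rw [← ha]; ring⟩
  choose A hA using h1
  have hgA : (g : Matrix (Fin r) (Fin r) ℤ_[ℓ]) = 1 + (ℓ : ℤ_[ℓ]) ^ sExp ℓ • Matrix.of A := by
    ext i j
    rw [hA]; simp
  have := good_pow (Matrix.of A) i j
  rw [← hgA] at this
  exact this

lemma cyclic_preconnected {ℓ r : ℕ} [Fact ℓ.Prime] (g : GL (Fin r) ℤ_[ℓ]) (hg : glRed ℓ r g = 1) :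
    @IsPreconnected _ (zariskiGL (Fin r) ℚ_[ℓ]) (Set.range fun n : ℕ => glPhi ℓ r (g ^ n)) := by
  letI t0 := natTop ℓ
  letI t1 := zariskiMat (Fin r) ℚ_[ℓ]
  letI t2 := zariskiGL (Fin r) ℚ_[ℓ]
  have hc : Continuous (fun n : ℕ => glPhi ℓ r (g ^ n)) := by
    refine continuous_induced_rng.2 ?_
    have h1 := natTop_continuous_mat _ (good_of_ker g hg)
    have h2 := natTop_continuous_mat _ (good_of_ker g⁻¹ (by rw [map_inv, hg, inv_one]))
    convert h1.prodMk h2 using 2 with n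
    simp only [Function.comp, ← map_inv, inv_pow]
  rw [← Set.image_univ]
  exact (natTop_preconnected ℓ).image _ hc.continuousOn

lemma kernel_preconnected {ℓ r : ℕ} [Fact ℓ.Prime] (Γ : Subgroup (GL (Fin r) ℤ_[ℓ]))
    (hΓ : ∀ g ∈ Γ, glRed ℓ r g = 1) :
    @IsPreconnected _ (zariskiGL (Fin r) ℚ_[ℓ]) (glPhi ℓ r '' (Γ : Set (GL (Fin r) ℤ_[ℓ]))) := by
  letI t2 := zariskiGL (Fin r) ℚ_[ℓ]
  refine isPreconnected_of_forall 1 ?_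
  rintro _ ⟨g, hg, rfl⟩
  refine ⟨Set.range fun n : ℕ => glPhi ℓ r (g ^ n), ?_, ⟨0, by simp⟩, ⟨1, by simp⟩, cyclic_preconnected g (hΓ g hg)⟩
  rintro _ ⟨n, rfl⟩
  exact ⟨_, Γ.pow_mem hg n, rfl⟩

lemma card_pi0_aux (ℓ r : ℕ) [Fact ℓ.Prime] (P : Subgroup (GL (Fin r) ℤ_[ℓ])) :
    Nat.card (zPi0 (zClosure (glPhi ℓ r '' (P : Set (GL (Fin r) ℤ_[ℓ]))))) ≤
      Nat.card (GL (Fin r) (ZMod (ℓ ^ sExp ℓ))) := by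
  letI t2 := zariskiGL (Fin r) ℚ_[ℓ]
  haveI : NeZero (ℓ ^ sExp ℓ) := ⟨pow_ne_zero _ (Fact.out : ℓ.Prime).ne_zero⟩
  haveI : Finite (GL (Fin r) (ZMod (ℓ ^ sExp ℓ))) := inferInstance
  set X := zClosure (glPhi ℓ r '' (P : Set (GL (Fin r) ℤ_[ℓ]))) with hX
  have hsub : ∀ x ∈ P, glPhi ℓ r x ∈ X := fun x hx => subset_closure ⟨x, hx, rfl⟩
  have hch : ∀ y : GL (Fin r) (ZMod (ℓ ^ sExp ℓ)), ∃ x ∈ P,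
      (∃ z ∈ P, glRed ℓ r z = y) → glRed ℓ r x = y := by
    intro y
    by_cases h : ∃ z ∈ P, glRed ℓ r z = y
    · obtain ⟨z, hz, hzy⟩ := h
      exact ⟨z, hz, fun _ => hzy⟩
    · exact ⟨1, P.one_mem, fun h' => absurd h' h⟩
  choose x hxP hx using hch
  set Γ : Subgroup (GL (Fin r) ℤ_[ℓ]) := P ⊓ (glRed ℓ r).ker with hΓ
  set C : GL (Fin r) (ZMod (ℓ ^ sExp ℓ)) → Set (GL (Fin r) ℚ_[ℓ]) := fun y =>
    (fun z => glPhi ℓ r (x y) * z) '' (glPhi ℓ r '' (Γ : Set (GL (Fin r) ℤ_[ℓ]))) with hC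
  have hCpre : ∀ y, IsPreconnected (closure (C y)) := fun y =>
    ((kernel_preconnected Γ (fun g hg => hg.2)).image _
      (zariskiGL_mul_left _).continuousOn).closure
  have hCX : ∀ y, closure (C y) ⊆ X := by
    intro y
    refine closure_mono ?_
    rintro _ ⟨_, ⟨g, hg, rfl⟩, rfl⟩
    exact ⟨x y * g, P.mul_mem (hxP y) hg.1, map_mul _ _ _⟩
  have hxC : ∀ y, glPhi ℓ r (x y) ∈ closure (C y) := fun y =>
    subset_closure ⟨1, ⟨1, Γ.one_mem, map_one _⟩, mul_one _⟩
  have hcov : X ⊆ ⋃ y, closure (C y) := by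
    rw [← closure_iUnion_of_finite]
    refine closure_mono ?_
    rintro _ ⟨z, hz, rfl⟩
    refine Set.mem_iUnion.2 ⟨glRed ℓ r z, _, ⟨(x (glRed ℓ r z))⁻¹ * z, ⟨?_, ?_⟩, rfl⟩, ?_⟩
    · exact P.mul_mem (P.inv_mem (hxP _)) hz
    · change glRed ℓ r _ = 1
      rw [map_mul, map_inv, hx _ ⟨z, hz, rfl⟩, inv_mul_cancel]
    · beta_reduce
      rw [← map_mul, mul_inv_cancel_left]
  let F : GL (Fin r) (ZMod (ℓ ^ sExp ℓ)) → ConnectedComponents X := fun y =>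
    ((⟨glPhi ℓ r (x y), hsub _ (hxP y)⟩ : X) : ConnectedComponents X)
  have hF : Function.Surjective F := by
    intro c
    obtain ⟨⟨w, hw⟩, rfl⟩ := ConnectedComponents.surjective_coe c
    obtain ⟨y, hy⟩ := Set.mem_iUnion.1 (hcov hw)
    refine ⟨y, Eq.symm (ConnectedComponents.coe_eq_coe'.2 ?_)⟩
    have hpre : IsPreconnected ((Subtype.val : X → _) ⁻¹' closure (C y)) := by
      rw [← Topology.IsInducing.subtypeVal.isPreconnected_image, Subtype.image_preimage_coe,
        Set.inter_eq_right.2 (hCX y)]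
      exact hCpre y
    exact hpre.subset_connectedComponent (hxC y) hy
  exact Nat.card_le_card_of_surjective F hF

end topo

/-- Let `ℓ` be a prime, `s_ℓ = ℓ` if `ℓ ≠ 2` and `s_ℓ = 4` if `ℓ = 2`, `T` a
free `ℤ_ℓ`-module of rank `r`, and `P ⊆ GL(T)` a closed subgroup. Then the number of
connected components of the Zariski closure `G` of `P` in `GL(T ⊗ ℚ_ℓ) = GL_r(ℚ_ℓ)` is at
most `|GL_r(ℤ/s_ℓ)|`. -/
theorem card_pi0_zariski_closure_le (ℓ r : ℕ) [Fact ℓ.Prime]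
    (P : Subgroup (GL (Fin r) ℤ_[ℓ])) (hP : IsClosed (P : Set (GL (Fin r) ℤ_[ℓ]))) :
    Nat.card (zPi0 (zClosure
      ((Units.map (((PadicInt.Coe.ringHom (p := ℓ)).mapMatrix :
          Matrix (Fin r) (Fin r) ℤ_[ℓ] →+* Matrix (Fin r) (Fin r) ℚ_[ℓ])).toMonoidHom :
        GL (Fin r) ℤ_[ℓ] →* GL (Fin r) ℚ_[ℓ]) '' (P : Set (GL (Fin r) ℤ_[ℓ]))))) ≤
      Nat.card (GL (Fin r) (ZMod (if ℓ = 2 then 4 else ℓ))) := by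
  have hs : (if ℓ = 2 then 4 else ℓ) = ℓ ^ sExp ℓ := by
    unfold sExp
    split_ifs with h
    · subst h; rfl
    · simp
  rw [hs]
  exact card_pi0_aux ℓ r P
end
end

section
/- Let G be a reductive algebraic group over a field of characteristic zero with identity component G⁰. If for every finite-dimensional representation W of the ambient general linear group containing G one has W^G = W^{G⁰}, then G is connected. -/
noncomputable section
open Matrix

variable {n : Type*} [Fintype n] [DecidableEq n] {K : Type*} [CommRing K]

/-- The standard (inclusion) representation of a subgroup `G ⊆ GL_n(K)` on `K^n`. -/
noncomputable def stdRepOf {K : Type*} [Field K] {nn : Type*} [Fintype nn] [DecidableEq nn]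
    (G : Subgroup (GL nn K)) : Representation K G (nn → K) :=
  ((Matrix.toLinAlgEquiv' (R := K) (n := nn)).toAlgHom.toRingHom.toMonoidHom).comp
    ((Units.coeHom (Matrix nn nn K)).comp G.subtype)

namespace LP
open Polynomial LieAlgebra LieModule
attribute [local instance] LieRing.ofAssociativeRing

theorem nilp_of_trace {k V : Type*} [Field k] [CharZero k] [AddCommGroup V] [Module k V]
    [FiniteDimensional k V] (x : Module.End k V)
    (h : ∀ p : k[X], LinearMap.trace k V (x * aeval x p) = 0) : IsNilpotent x := by
  have hm : minpoly k x ≠ 0 := minpoly.ne_zero (Algebra.IsIntegral.isIntegral x)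
  obtain ⟨q, hq, hq0⟩ := Polynomial.exists_eq_pow_rootMultiplicity_mul_and_not_dvd _ hm 0
  set n := (minpoly k x).rootMultiplicity 0
  simp only [map_zero, sub_zero] at hq hq0
  have hc : IsCoprime (X ^ (n+1) : k[X]) q := by
    apply IsCoprime.pow_left
    exact (Polynomial.irreducible_X.coprime_iff_not_dvd).mpr hq0
  obtain ⟨u, v, huv⟩ := hc
  have hz : x ^ n * aeval x q = 0 := by
    have := minpoly.aeval k x
    rw [hq] at this
    simpa using this
  have hz' : aeval x (X ^ (n+1) * q) = 0 := by
    simp [pow_succ', mul_assoc, hz]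
  set e := aeval x (u * X^(n+1)) with he
  have h1 : e = 1 - aeval x (v*q) := by
    rw [he, eq_sub_iff_add_eq, ← map_add, huv, map_one]
  have hid : IsIdempotentElem e := by
    have : e * aeval x (v*q) = 0 := by
      rw [he, ← map_mul, show u * X^(n+1) * (v*q) = u * v * (X ^ (n+1) * q) by ring, map_mul, hz', mul_zero]
    unfold IsIdempotentElem
    conv_lhs => rw [h1, mul_sub, mul_one]
    rw [← h1]; rw [this]; simp
  have hte : LinearMap.trace k V e = 0 := by
    have h2 : x * aeval x (X^n * u) = e := by
      rw [he, show (u * X^(n+1) : k[X]) = X * (X^n * u) by ring, map_mul _ X, aeval_X]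
    rw [← h2]; exact h _
  have he0 : e = 0 := LinearMap.IsIdempotentElem.eq_zero_of_trace_eq_zero hid hte
  refine ⟨n+1, ?_⟩
  have : aeval x (X^(n+1) * (u * X ^(n+1) + v * q)) = 0 := by
    rw [show (X^(n+1) * (u * X ^(n+1) + v * q) : k[X]) = X^(n+1) * (u * X ^(n+1)) + v * (X^(n+1) * q) by ring,
      map_add, map_mul, ← he, he0, map_mul _ v, hz']
    simp
  rw [huv] at this
  simpa using this

section
variable {k L V : Type*} [Field k] [CharZero k] [LieRing L] [LieAlgebra k L] [FiniteDimensional k L]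
  [AddCommGroup V] [Module k V] [LieRingModule L V] [LieModule k L V] [FiniteDimensional k V]

/-- An ideal acting nilpotently on a faithful module generated by simples vanishes. -/
theorem ideal_eq_bot (hV : sSup {M : LieSubmodule k L V | IsAtom M} = ⊤)
    (hf : ∀ x : L, (∀ v : V, ⁅x, v⁆ = 0) → x = 0)
    (J : LieIdeal k L) (hJ : ∀ x ∈ J, IsNilpotent (toEnd k L V x)) : J = ⊥ := by
  let N : LieSubmodule k L V :=
    { carrier := {m | ∀ x ∈ J, ⁅x, m⁆ = 0}
      add_mem' := by intro a b ha hb x hx; simp [ha x hx, hb x hx]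
      zero_mem' := by intro x _; simp
      smul_mem' := by intro c a ha x hx; simp [ha x hx]
      lie_mem := by
        intro y m hm x hx
        rw [leibniz_lie, hm x hx, lie_zero, add_zero]
        exact hm _ (lie_mem_left k L J x y hx) }
  have hN : N = ⊤ := by
    rw [eq_top_iff, ← hV]
    apply sSup_le
    intro M hM
    have hM : IsAtom M := hM
    have : Nontrivial M := by
      rw [LieSubmodule.nontrivial_iff_ne_bot]; exact hM.1
    have hn : LieModule.IsNilpotent J M := by
      rw [LieModule.isNilpotent_iff_forall' (R := k)]
      rintro ⟨x, hx⟩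
      obtain ⟨n, hn⟩ := hJ x hx
      refine ⟨n, ?_⟩
      ext ⟨m, hm⟩
      have key : ∀ (j : ℕ) (m : M), (((toEnd k J M ⟨x, hx⟩)^j) m : V) = ((toEnd k L V x)^j) (m : V) := by
        intro j
        induction j with
        | zero => simp
        | succ j ih => intro m; rw [pow_succ, pow_succ, Module.End.mul_apply, Module.End.mul_apply, ih]; rfl
      rw [key, hn]; simp
    have hnt := LieModule.nontrivial_max_triv_of_isNilpotent k J M
    obtain ⟨⟨m, hm⟩, hm0⟩ := exists_ne (0 : maxTrivSubmodule k J M)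
    have hne : M ⊓ N ≠ ⊥ := by
      intro hb
      have : (m : V) ∈ M ⊓ N := by
        refine ⟨m.2, fun x hx => ?_⟩
        have := (mem_maxTrivSubmodule k J M m).1 hm ⟨x, hx⟩
        have := congrArg (Subtype.val) this
        simpa using this
      rw [hb] at this
      apply hm0
      ext
      simpa using this
    have : M ⊓ N = M := (hM.le_iff.1 inf_le_left).resolve_left hne
    exact inf_eq_left.1 this
  rw [LieSubmodule.eq_bot_iff]
  intro x hx
  apply hf
  intro v
  have : v ∈ N := by rw [hN]; trivial
  exact this x hx

theorem trace_lie_mul (a b c : Module.End k V) (h : Commute b c) :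
    LinearMap.trace k V ((a * b - b * a) * c) = 0 := by
  rw [sub_mul, map_sub, sub_eq_zero, mul_assoc, h.eq, ← mul_assoc, LinearMap.trace_mul_comm, mul_assoc]

theorem abelian_central (hV : sSup {M : LieSubmodule k L V | IsAtom M} = ⊤)
    (hf : ∀ x : L, (∀ v : V, ⁅x, v⁆ = 0) → x = 0)
    (J : LieIdeal k L) (hJ : ∀ x ∈ J, ∀ y ∈ J, ⁅x, y⁆ = 0) : J ≤ center k L := by
  have key : ⁅(⊤ : LieIdeal k L), J⁆ = ⊥ := by
    apply ideal_eq_bot hV hf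
    intro x hx
    apply nilp_of_trace
    intro p
    have hxJ : x ∈ J := LieSubmodule.lie_le_right J ⊤ hx
    have hcomm : ∀ b ∈ J, Commute (toEnd k L V b) (aeval (toEnd k L V x) p) := by
      intro b hb
      have h0 : Commute (toEnd k L V b) (toEnd k L V x) := by
        have : ⁅toEnd k L V b, toEnd k L V x⁆ = 0 := by
          rw [← LieHom.map_lie, hJ b hb x hxJ, map_zero]
        rwa [commute_iff_lie_eq]
      exact Algebra.commute_of_mem_adjoin_singleton_of_commute (aeval_mem_adjoin_singleton k _) h0
    generalize aeval (toEnd k L V x) p = c at hcomm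
    clear hxJ
    rw [← LieSubmodule.mem_toSubmodule, LieSubmodule.lieIdeal_oper_eq_linear_span'] at hx
    induction hx using Submodule.span_induction with
    | mem y hy =>
      obtain ⟨a, -, b, hb, rfl⟩ := hy
      rw [LieHom.map_lie, Ring.lie_def]
      exact trace_lie_mul _ _ _ (hcomm b hb)
    | zero => simp
    | add y z _ _ hy hz => simp [add_mul, *] 
    | smul r y _ hy => simp [*]
  intro x hx
  rw [mem_maxTrivSubmodule]
  intro y
  have : ⁅y, x⁆ ∈ ⁅(⊤ : LieIdeal k L), J⁆ := LieSubmodule.lie_mem_lie trivial hx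
  rw [key] at this
  simpa using this

theorem center_inf (hV : sSup {M : LieSubmodule k L V | IsAtom M} = ⊤)
    (hf : ∀ x : L, (∀ v : V, ⁅x, v⁆ = 0) → x = 0) :
    center k L ⊓ ⁅(⊤ : LieIdeal k L), (⊤ : LieIdeal k L)⁆ = ⊥ := by
  apply ideal_eq_bot hV hf
  rintro x ⟨hxc, hx⟩
  apply nilp_of_trace
  intro p
  have hcomm : ∀ b, Commute (toEnd k L V b) (aeval (toEnd k L V x) p) := by
    intro b
    have h0 : Commute (toEnd k L V b) (toEnd k L V x) :=
      commute_toEnd_of_mem_center_right V hxc b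
    exact Algebra.commute_of_mem_adjoin_singleton_of_commute (aeval_mem_adjoin_singleton k _) h0
  generalize aeval (toEnd k L V x) p = c at hcomm
  clear hxc
  change x ∈ ⁅(⊤ : LieIdeal k L), (⊤ : LieIdeal k L)⁆ at hx
  rw [← LieSubmodule.mem_toSubmodule, LieSubmodule.lieIdeal_oper_eq_linear_span'] at hx
  induction hx using Submodule.span_induction with
  | mem y hy =>
    obtain ⟨a, -, b, hb, rfl⟩ := hy
    rw [LieHom.map_lie, Ring.lie_def]
    exact trace_lie_mul _ _ _ (hcomm b)
  | zero => simp
  | add y z _ _ hy hz => simp [add_mul, *] 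
  | smul r y _ hy => simp [*]

theorem radical_le (hV : sSup {M : LieSubmodule k L V | IsAtom M} = ⊤)
    (hf : ∀ x : L, (∀ v : V, ⁅x, v⁆ = 0) → x = 0) : radical k L ≤ center k L := by
  have hs : IsSolvable (radical k L) := inferInstance
  obtain ⟨n, hn⟩ := IsSolvable.solvable k (radical k L)
  rw [LieIdeal.derivedSeries_eq_bot_iff] at hn
  -- descend
  have hdesc : ∀ n, derivedSeriesOfIdeal k L (n+1) (radical k L) = ⊥ →
      derivedSeriesOfIdeal k L 1 (radical k L) = ⊥ := by
    intro n
    induction n with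
    | zero => exact id
    | succ n ih =>
      intro h
      apply ih
      have hab : derivedSeriesOfIdeal k L (n+1) (radical k L) ≤ center k L := by
        apply abelian_central hV hf
        intro x hx y hy
        rw [derivedSeriesOfIdeal_succ] at h
        have : ⁅x, y⁆ ∈ (⊥ : LieIdeal k L) := by
          rw [← h]; exact LieSubmodule.lie_mem_lie hx hy
        simpa using this
      rw [eq_bot_iff, ← center_inf hV hf]
      refine le_inf hab ?_
      rw [derivedSeriesOfIdeal_succ]
      exact LieSubmodule.mono_lie le_top le_top
  have h1 : derivedSeriesOfIdeal k L 1 (radical k L) = ⊥ := by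
    apply hdesc n
    rw [derivedSeriesOfIdeal_succ, hn]
    simp
  apply abelian_central hV hf
  intro x hx y hy
  have : ⁅x, y⁆ ∈ (⊥ : LieIdeal k L) := by
    rw [← h1, derivedSeriesOfIdeal_succ, derivedSeriesOfIdeal_zero]; exact LieSubmodule.lie_mem_lie hx hy
  simpa using this

end
end LP

namespace LP
open Polynomial LieAlgebra LieModule
attribute [local instance] LieRing.ofAssociativeRing

theorem killing_nondeg {k L V : Type*} [Field k] [CharZero k] [LieRing L] [LieAlgebra k L] [FiniteDimensional k L]
  [AddCommGroup V] [Module k V] [LieRingModule L V] [LieModule k L V] [FiniteDimensional k V] [IsKilling k L]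
  (𝔫 : LieIdeal k L) (hf : ∀ x ∈ 𝔫, (∀ v : V, ⁅x, v⁆ = 0) → x = 0)
  (ht : ∀ x ∈ 𝔫, ∀ y ∈ 𝔫, traceForm k L V x y = 0) : 𝔫 = ⊥ := by
  have h0 : traceForm k 𝔫 V = 0 := by
    ext x y
    exact ht x x.2 y y.2
  have hn := LieModule.isNilpotent_derivedSeries_of_traceForm_eq_zero h0
  rw [LieModule.isNilpotent_iff_forall' (R := k)] at hn
  have hD : ∀ x ∈ ⁅𝔫, 𝔫⁆, IsNilpotent (toEnd k L V x) := by
    intro x hx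
    refine hn ⟨⟨x, LieSubmodule.lie_le_left 𝔫 𝔫 hx⟩, ?_⟩
    rwa [LieIdeal.derivedSeries_eq_derivedSeriesOfIdeal_comap, LieIdeal.mem_comap]
  have hle : ⁅𝔫, 𝔫⁆ ≤ 𝔫 := LieSubmodule.lie_le_left 𝔫 𝔫
  have hnil : LieRing.IsNilpotent (⁅𝔫, 𝔫⁆ : LieIdeal k L) := by
    rw [LieAlgebra.isNilpotent_iff_forall (R := k)]
    rintro ⟨x, hx⟩
    obtain ⟨m, hm⟩ := LieAlgebra.ad_nilpotent_of_nilpotent (R := k) (hD x hx)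
    refine ⟨m, ?_⟩
    ext y
    have key : ∀ (j : ℕ) (y : (⁅𝔫, 𝔫⁆ : LieIdeal k L)), toEnd k L V (((ad k (⁅𝔫, 𝔫⁆ : LieIdeal k L) ⟨x, hx⟩)^j) y : L)
        = ((ad k (Module.End k V) (toEnd k L V x))^j) (toEnd k L V y) := by
      intro j
      induction j with
      | zero => simp
      | succ j ih =>
        intro y
        rw [pow_succ, pow_succ, Module.End.mul_apply, Module.End.mul_apply, ih]
        congr 1
        exact LieHom.map_lie (toEnd k L V) x y
    have := key m y
    rw [hm] at this
    have h2 := hf _ (hle (((ad k (⁅𝔫, 𝔫⁆ : LieIdeal k L) ⟨x, hx⟩)^m) y).2) (fun v => by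
      exact LinearMap.congr_fun this v)
    simpa using h2
  have hb : ⁅𝔫, 𝔫⁆ = ⊥ := by
    have h1 : HasTrivialRadical k L := inferInstance
    rw [hasTrivialRadical_iff_no_solvable_ideals] at h1
    apply h1
    infer_instance
  have : IsLieAbelian 𝔫 := (LieSubmodule.lie_abelian_iff_lie_self_eq_bot 𝔫).2 hb
  exact IsKilling.ideal_eq_bot_of_isLieAbelian 𝔫
 
/-- Casimir element commutes. -/
theorem casimir {k L V : Type*} [Field k] [CharZero k] [LieRing L] [LieAlgebra k L] [FiniteDimensional k L]
  [AddCommGroup V] [Module k V] [LieRingModule L V] [LieModule k L V] [FiniteDimensional k V]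
  (J : LieIdeal k L) (hJ : J ≠ ⊥)
  (hnd : (traceForm k J V).Nondegenerate) :
  ∃ C : Module.End k V, (∀ x : L, Commute (toEnd k L V x) C) ∧ LinearMap.trace k V C ≠ 0 ∧
    ∀ φ : V →ₗ[k] k, (∀ (x : L) v, φ ⁅x, v⁆ = 0) → ∀ v, φ (C v) = 0 := by
  classical
  set B : LinearMap.BilinForm k J := traceForm k J V with hB
  let b := Module.finBasis k J
  let b' := B.dualBasis hnd b
  have sym : B.IsSymm := ⟨fun x y => by simpa using traceForm_comm k J V x y⟩
  let ρ := toEnd k L V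
  refine ⟨∑ i, ρ (b i) * ρ (b' i), ?_, ?_, ?_⟩
  · intro x
    have exp1 : ∀ y : J, y = ∑ j, B y (b' j) • b j := by
      intro y
      conv_lhs => rw [← b.sum_repr y]
      refine Finset.sum_congr rfl fun j _ => ?_
      congr 1
      have := B.dualBasis_repr_apply hnd b' y j
      rw [show B.dualBasis hnd b' = b from B.dualBasis_dualBasis hnd sym b] at this
      exact this
    have exp2 : ∀ y : J, y = ∑ j, B y (b j) • b' j := by
      intro y
      conv_lhs => rw [← b'.sum_repr y]
      refine Finset.sum_congr rfl fun j _ => ?_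
      congr 1
      exact B.dualBasis_repr_apply hnd b y j
    have inv : ∀ y z : J, B ⁅x, y⁆ z = - B y ⁅x, z⁆ := by
      intro y z
      have h1 := traceForm_apply_lie_apply k L V (y : L) x z
      have h2 : traceForm k L V ⁅x, (y:L)⁆ z = - traceForm k L V ⁅(y:L), x⁆ z := by
        rw [← lie_skew, map_neg]; rfl
      exact h2.trans (congrArg Neg.neg h1)
    have lie1 : ∀ i, ρ x * ρ (b i) - ρ (b i) * ρ x = ∑ j, B ⁅x, b i⁆ (b' j) • ρ (b j) := by
      intro i
      have : ρ ⁅x, (b i : L)⁆ = ρ x * ρ (b i) - ρ (b i) * ρ x := by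
        rw [LieHom.map_lie, Ring.lie_def]
      rw [← this]
      have h := congrArg (fun y : J => ρ (y : L)) (exp1 ⁅x, b i⁆)
      simpa using h
    have lie2 : ∀ i, ρ x * ρ (b' i) - ρ (b' i) * ρ x = ∑ j, B ⁅x, b' i⁆ (b j) • ρ (b' j) := by
      intro i
      have : ρ ⁅x, (b' i : L)⁆ = ρ x * ρ (b' i) - ρ (b' i) * ρ x := by
        rw [LieHom.map_lie, Ring.lie_def]
      rw [← this]
      have h := congrArg (fun y : J => ρ (y : L)) (exp2 ⁅x, b' i⁆)
      simpa using h
    have hc : ∀ i j, B ⁅x, b' i⁆ (b j) = - B ⁅x, b j⁆ (b' i) := by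
      intro i j
      rw [inv, sym.eq]
    show ρ x * _ = _ * ρ x
    rw [← sub_eq_zero, Finset.mul_sum, Finset.sum_mul, ← Finset.sum_sub_distrib]
    have : ∀ i, ρ x * (ρ (b i) * ρ (b' i)) - ρ (b i) * ρ (b' i) * ρ x
        = (∑ j, B ⁅x, b i⁆ (b' j) • (ρ (b j) * ρ (b' i))) - ∑ j, B ⁅x, b j⁆ (b' i) • (ρ (b i) * ρ (b' j)) := by
      intro i
      have e : ρ x * (ρ (b i) * ρ (b' i)) - ρ (b i) * ρ (b' i) * ρ x
        = (ρ x * ρ (b i) - ρ (b i) * ρ x) * ρ (b' i) + ρ (b i) * (ρ x * ρ (b' i) - ρ (b' i) * ρ x) := by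
        noncomm_ring
      rw [e, lie1, lie2, Finset.sum_mul, Finset.mul_sum, sub_eq_add_neg, ← Finset.sum_neg_distrib]
      refine congrArg₂ _ (Finset.sum_congr rfl fun j _ => ?_) (Finset.sum_congr rfl fun j _ => ?_)
      · simp
      · rw [hc]; simp
    rw [Finset.sum_congr rfl fun i _ => this i, Finset.sum_sub_distrib, sub_eq_zero, Finset.sum_comm]
  · have : ∀ i, LinearMap.trace k V (ρ (b i) * ρ (b' i)) = 1 := by
      intro i
      have := B.apply_dualBasis_right hnd sym b i i
      rw [if_pos rfl] at this
      exact this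
    rw [map_sum, Finset.sum_congr rfl fun i _ => this i]
    simp only [Finset.sum_const, Finset.card_univ, Fintype.card_fin, nsmul_eq_mul, mul_one]
    rw [Nat.cast_ne_zero]
    intro h
    rw [Module.finrank_zero_iff] at h
    apply hJ
    rw [LieSubmodule.eq_bot_iff]
    intro x hx
    simpa using congrArg Subtype.val (Subsingleton.elim (⟨x, hx⟩ : J) 0)
  · intro φ hφ v
    simp only [LinearMap.sum_apply, map_sum, Module.End.mul_apply]
    exact Finset.sum_eq_zero fun i _ => hφ _ _

theorem weyl1 {k L : Type*} [Field k] [CharZero k] [LieRing L] [LieAlgebra k L] [FiniteDimensional k L]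
  [IsKilling k L] (d : ℕ) : ∀ (W : Type _)
  [AddCommGroup W] [Module k W] [LieRingModule L W] [LieModule k L W] [FiniteDimensional k W]
  (_ : Module.finrank k W = d)
  (φ : W →ₗ[k] k) (_ : φ ≠ 0) (_ : ∀ (x : L) v, φ ⁅x, v⁆ = 0), ∃ w : W, (∀ x : L, ⁅x, w⁆ = 0) ∧ φ w ≠ 0 := by
  induction d using Nat.strong_induction_on with
  | _ d ih =>
  intro W _ _ _ _ _ hd φ hφ hinv
  set 𝔨 := LieModule.ker k L W with h𝔨
  set 𝔠 := LieIdeal.killingCompl k L 𝔨 with h𝔠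
  have hcompl : IsCompl 𝔨 𝔠 := LieIdeal.isCompl_killingCompl 𝔨
  by_cases hc : 𝔠 = ⊥
  · have hk : 𝔨 = ⊤ := by
      have := hcompl.sup_eq_top; rwa [hc, sup_bot_eq] at this
    obtain ⟨w, hw⟩ : ∃ w, φ w ≠ 0 := by
      by_contra! h; exact hφ (LinearMap.ext h)
    refine ⟨w, fun x => ?_, hw⟩
    have : x ∈ 𝔨 := by rw [hk]; trivial
    exact (LieModule.mem_ker k L W x).1 this w
  · have hfaith : ∀ x ∈ 𝔠, (∀ v : W, ⁅x, v⁆ = 0) → x = 0 := by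
      intro x hx hv
      have h1 : x ∈ 𝔨 ⊓ 𝔠 := ⟨(LieModule.mem_ker k L W x).2 hv, hx⟩
      rw [hcompl.inf_eq_bot] at h1
      simpa using h1
    have hnd : (traceForm k 𝔠 W).Nondegenerate := by
      let 𝔫 : LieIdeal k L :=
        { carrier := {x | x ∈ 𝔠 ∧ ∀ y ∈ 𝔠, traceForm k L W x y = 0}
          add_mem' := by
            rintro a b ⟨ha, ha'⟩ ⟨hb, hb'⟩
            exact ⟨add_mem ha hb, fun y hy => by simp only [map_add, LinearMap.add_apply, ha' y hy, hb' y hy, add_zero]⟩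
          zero_mem' := ⟨zero_mem _, fun y hy => by rw [map_zero]; rfl⟩
          smul_mem' := by
            rintro c a ⟨ha, ha'⟩
            exact ⟨Submodule.smul_mem _ c ha, fun y hy => by simp only [map_smul, LinearMap.smul_apply, ha' y hy, smul_zero]⟩
          lie_mem := by
            rintro x m ⟨hm, hm'⟩
            refine ⟨lie_mem_right k L 𝔠 x m hm, fun y hy => ?_⟩
            rw [← lie_skew, map_neg, LinearMap.neg_apply, traceForm_apply_lie_apply, hm' _ (lie_mem_right k L 𝔠 x y hy), neg_zero] }
      have h𝔫 : 𝔫 = ⊥ := killing_nondeg (V := W) 𝔫 (fun x hx => hfaith x hx.1) (fun x hx y hy => hx.2 y hy.1)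
      have hl : ∀ x : 𝔠, (∀ y, traceForm k 𝔠 W x y = 0) → x = 0 := by
        intro x hx
        have : (x : L) ∈ 𝔫 := ⟨x.2, fun y hy => hx ⟨y, hy⟩⟩
        rw [h𝔫] at this
        exact Subtype.ext (by simpa using this)
      exact ⟨hl, fun x hx => hl x fun y => by rw [traceForm_comm]; exact hx y⟩
    obtain ⟨C, hC, htr, hφC⟩ := casimir (V := W) 𝔠 hc hnd
    have hφC := hφC φ hinv
    obtain ⟨n, hn⟩ := Filter.eventually_atTop.1 (LinearMap.eventually_isCompl_ker_pow_range_pow C)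
    have hn := hn (n+1) (by omega)
    have hcomm : ∀ x : L, Commute (toEnd k L W x) (C^(n+1)) := fun x => (hC x).pow_right _
    let N : LieSubmodule k L W :=
      { LinearMap.ker (C^(n+1)) with
        lie_mem := by
          intro x m hm
          have hm : (C^(n+1)) m = 0 := hm
          show (C^(n+1)) ⁅x, m⁆ = 0
          have := LinearMap.congr_fun (hcomm x).eq m
          rw [Module.End.mul_apply, Module.End.mul_apply, hm, map_zero] at this
          exact this.symm }
    have hNt : LinearMap.ker (C^(n+1)) ≠ ⊤ := by
      intro h
      rw [LinearMap.ker_eq_top] at h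
      exact htr (LinearMap.isNilpotent_trace_of_isNilpotent ⟨_, h⟩).eq_zero
    have hφr : ∀ v, φ ((C^(n+1)) v) = 0 := by
      intro v; rw [pow_succ', Module.End.mul_apply]; exact hφC _
    have hlt : Module.finrank k N < d := by
      rw [← hd]
      exact Submodule.finrank_lt (lt_of_le_of_ne le_top hNt).ne
    obtain ⟨w, hw1, hw2⟩ := ih _ hlt N rfl (φ.comp N.toSubmodule.subtype) (by
      intro h
      apply hφ
      ext v
      have : v ∈ LinearMap.ker (C^(n+1)) ⊔ LinearMap.range (C^(n+1)) := by rw [hn.sup_eq_top]; trivial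
      obtain ⟨a, ha, b, ⟨c, rfl⟩, rfl⟩ := Submodule.mem_sup.1 this
      rw [map_add, hφr, add_zero]
      exact LinearMap.congr_fun h ⟨a, ha⟩) (by
      intro x v
      exact hinv x v)
    refine ⟨w, fun x => ?_, hw2⟩
    have := congrArg Subtype.val (hw1 x)
    simpa using this
end LP

namespace LP
open Polynomial LieAlgebra LieModule
attribute [local instance] LieRing.ofAssociativeRing

theorem center_semisimple {k L V : Type*} [Field k] [CharZero k] [LieRing L] [LieAlgebra k L]
  [AddCommGroup V] [Module k V] [LieRingModule L V] [LieModule k L V] [FiniteDimensional k V]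
  (hV : sSup {M : LieSubmodule k L V | IsAtom M} = ⊤)
  (z : L) (hz : z ∈ center k L) : (toEnd k L V z).IsSemisimple := by
  obtain ⟨n, hn, s, hs, hnil, hss, he⟩ := (toEnd k L V z).exists_isNilpotent_isSemisimple
  have hcomm : ∀ x : L, Commute (toEnd k L V x) n := by
    intro x
    exact Algebra.commute_of_mem_adjoin_singleton_of_commute hn
      (commute_toEnd_of_mem_center_right V hz x)
  let N : LieSubmodule k L V :=
    { LinearMap.ker n with
      lie_mem := by
        intro x m hm
        have hm : n m = 0 := hm
        show n ⁅x, m⁆ = 0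
        have := LinearMap.congr_fun (hcomm x).eq m
        rw [Module.End.mul_apply, Module.End.mul_apply, hm, map_zero] at this
        exact this.symm }
  have hN : N = ⊤ := by
    rw [eq_top_iff, ← hV]
    apply sSup_le
    intro M hM
    have hM : IsAtom M := hM
    refine inf_eq_left.1 ((hM.le_iff.1 inf_le_left).resolve_left ?_)
    -- nilpotent n preserves M
    have hMn : ∀ m ∈ M, n m ∈ M := by
      intro m hm
      obtain ⟨p, hp⟩ := Algebra.adjoin_singleton_eq_range_aeval k (toEnd k L V z) ▸ hn
      rw [← hp]
      have hM1 : ∀ m ∈ M, (toEnd k L V z) m ∈ M := fun m hm => M.lie_mem hm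
      clear hp
      induction p using Polynomial.induction_on' with
      | add p q hp hq =>
        simp only [map_add]
        exact M.add_mem hp hq
      | monomial i c =>
        have hi : ∀ i, ((toEnd k L V z)^i) m ∈ M := by
          intro i
          induction i with
          | zero => simpa using hm
          | succ i ih => rw [pow_succ', Module.End.mul_apply]; exact hM1 _ ih
        have := M.smul_mem c (hi i)
        simpa [Polynomial.aeval_monomial] using this
    obtain ⟨m0, hm0, hne⟩ : ∃ m ∈ M, m ≠ 0 := by
      by_contra! h
      exact hM.1 ((LieSubmodule.eq_bot_iff M).2 h)
    obtain ⟨r, hr⟩ := hnil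
    have hex : ∃ j, (n^j) m0 = 0 := ⟨r, by rw [hr]; rfl⟩
    classical
    let j := Nat.find hex
    have hj : (n^j) m0 = 0 := Nat.find_spec hex
    have hj0 : j ≠ 0 := by
      intro h; rw [h] at hj; exact hne (by simpa using hj)
    have hj1 : (n^(j-1)) m0 ≠ 0 := Nat.find_min hex (by show j - 1 < j; omega)
    have hmem : ∀ i, (n^i) m0 ∈ M := by
      intro i
      induction i with
      | zero => simpa using hm0
      | succ i ih => rw [pow_succ', Module.End.mul_apply]; exact hMn _ ih
    intro hb
    refine hj1 ((LieSubmodule.eq_bot_iff _).1 hb _ ⟨hmem _, ?_⟩)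
    show n ((n^(j-1)) m0) = 0
    rw [← Module.End.mul_apply, ← pow_succ', Nat.sub_add_cancel (Nat.one_le_iff_ne_zero.2 hj0), hj]
  have hn0 : n = 0 := by
    ext v
    have : v ∈ N := by rw [hN]; trivial
    exact this
  rw [he, hn0, zero_add]
  exact hss

theorem quot_trivialRadical {k L V : Type*} [Field k] [CharZero k] [LieRing L] [LieAlgebra k L] [FiniteDimensional k L]
  [AddCommGroup V] [Module k V] [LieRingModule L V] [LieModule k L V] [FiniteDimensional k V]
  (hV : sSup {M : LieSubmodule k L V | IsAtom M} = ⊤)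
  (hf : ∀ x : L, (∀ v : V, ⁅x, v⁆ = 0) → x = 0) : HasTrivialRadical k (L ⧸ center k L) := by
  rw [hasTrivialRadical_iff_no_abelian_ideals]
  intro I hI
  let J : LieIdeal k L :=
    { carrier := {x | (LieSubmodule.Quotient.mk x : L ⧸ center k L) ∈ I}
      add_mem' := fun {a b} ha hb => I.add_mem ha hb
      zero_mem' := I.zero_mem
      smul_mem' := fun c a ha => I.smul_mem c ha
      lie_mem := by
        intro x m hm
        exact lie_mem_right k (L ⧸ center k L) I (LieSubmodule.Quotient.mk x) _ hm }
  have hJ : ⁅J, J⁆ = ⊥ := by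
    rw [eq_bot_iff, ← center_inf hV hf]
    refine le_inf ?_ (LieSubmodule.mono_lie le_top le_top)
    rw [LieSubmodule.lieIdeal_oper_eq_span, LieSubmodule.lieSpan_le]
    rintro _ ⟨⟨x, hx⟩, ⟨y, hy⟩, rfl⟩
    have h := hI.trivial ⟨_, hx⟩ ⟨_, hy⟩
    have h := congrArg Subtype.val h
    have h : (LieSubmodule.Quotient.mk ⁅x, y⁆ : L ⧸ center k L) = 0 := h
    exact (LieSubmodule.Quotient.mk_eq_zero').1 h
  have hJc : J ≤ center k L := by
    apply abelian_central hV hf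
    intro x hx y hy
    have : ⁅x, y⁆ ∈ (⊥ : LieIdeal k L) := by
      rw [← hJ]; exact LieSubmodule.lie_mem_lie hx hy
    simpa using this
  rw [LieSubmodule.eq_bot_iff]
  intro x hx
  obtain ⟨x, rfl⟩ := LieSubmodule.Quotient.surjective_mk' _ x
  have : x ∈ J := hx
  exact (LieSubmodule.Quotient.mk_eq_zero').2 (hJc this)

/-- lift -/
def liftHom {k L L' : Type*} [Field k] [LieRing L] [LieAlgebra k L] [LieRing L'] [LieAlgebra k L']
  (I : LieIdeal k L) (f : L →ₗ⁅k⁆ L') (h : ∀ x ∈ I, f x = 0) : (L ⧸ I) →ₗ⁅k⁆ L' :=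
  { Submodule.liftQ I.toSubmodule (f : L →ₗ[k] L') (fun x hx => h x hx) with
    map_lie' := by
      intro x y
      obtain ⟨x, rfl⟩ := LieSubmodule.Quotient.surjective_mk' _ x
      obtain ⟨y, rfl⟩ := LieSubmodule.Quotient.surjective_mk' _ y
      exact f.map_lie x y }

theorem weyl2 {k L V : Type*} [Field k] [CharZero k] [LieRing L] [LieAlgebra k L] [FiniteDimensional k L]
  [AddCommGroup V] [Module k V] [LieRingModule L V] [LieModule k L V] [FiniteDimensional k V]
  (hV : sSup {M : LieSubmodule k L V | IsAtom M} = ⊤)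
  (hf : ∀ x : L, (∀ v : V, ⁅x, v⁆ = 0) → x = 0) (d : ℕ) : ∀ (W : Type _)
  [AddCommGroup W] [Module k W] [LieRingModule L W] [LieModule k L W] [FiniteDimensional k W]
  (_ : Module.finrank k W = d)
  (_ : ∀ z ∈ center k L, (toEnd k L W z).IsSemisimple)
  (φ : W →ₗ[k] k) (_ : φ ≠ 0) (_ : ∀ (x : L) v, φ ⁅x, v⁆ = 0), ∃ w : W, (∀ x : L, ⁅x, w⁆ = 0) ∧ φ w ≠ 0 := by
  induction d using Nat.strong_induction_on with
  | _ d ih =>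
  intro W _ _ _ _ _ hd hss φ hφ hinv
  by_cases hz : ∀ z ∈ center k L, toEnd k L W z = 0
  · have := quot_trivialRadical hV hf
    let ρ := liftHom (center k L) (toEnd k L W) hz
    letI : LieRingModule (L ⧸ center k L) W := LieRingModule.compLieHom W ρ
    haveI : LieModule k (L ⧸ center k L) W := LieModule.compLieHom W ρ
    obtain ⟨w, hw, hw'⟩ := weyl1 (L := L ⧸ center k L) d W hd φ hφ (by
      intro x v
      obtain ⟨x, rfl⟩ := LieSubmodule.Quotient.surjective_mk' _ x
      exact hinv x v)
    exact ⟨w, fun x => hw (LieSubmodule.Quotient.mk x), hw'⟩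
  · push Not at hz
    obtain ⟨z, hz, hz0⟩ := hz
    set C := toEnd k L W z
    have hcomm : ∀ x : L, Commute (toEnd k L W x) C := fun x => commute_toEnd_of_mem_center_right W hz x
    let N : LieSubmodule k L W :=
      { LinearMap.ker C with
        lie_mem := by
          intro x m hm
          have hm : C m = 0 := hm
          show C ⁅x, m⁆ = 0
          have := LinearMap.congr_fun (hcomm x).eq m
          rw [Module.End.mul_apply, Module.End.mul_apply, hm, map_zero] at this
          exact this.symm }
    have hNt : LinearMap.ker C ≠ ⊤ := by
      rwa [Ne, LinearMap.ker_eq_top]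
    have hφr : ∀ v, φ (C v) = 0 := fun v => hinv z v
    have hlt : Module.finrank k N < d := by
      rw [← hd]
      exact Submodule.finrank_lt (lt_of_le_of_ne le_top hNt).ne
    -- semisimple : invariant complement of kernel
    obtain ⟨q, hq1, hq2⟩ := Module.End.isSemisimple_iff.1 (hss z hz) (LinearMap.ker C) (by
      intro v hv
      have hv : C v = 0 := hv
      show C (C v) = 0
      rw [hv, map_zero])
    have hq3 : ∀ v ∈ q, φ v = 0 := by
      -- C restricted to q is injective hence surjective onto q
      let Cq : q →ₗ[k] q := C.restrict (fun v hv => hq1 hv)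
      have hinj : Function.Injective Cq := by
        rw [← LinearMap.ker_eq_bot, LinearMap.ker_eq_bot']
        rintro ⟨v, hv⟩ h
        have h : C v = 0 := congrArg Subtype.val h
        have : v ∈ LinearMap.ker C ⊓ q := ⟨h, hv⟩
        rw [hq2.inf_eq_bot] at this
        exact Subtype.ext (by simpa using this)
      have hsurj := LinearMap.injective_iff_surjective.1 hinj
      intro v hv
      obtain ⟨u, hu⟩ := hsurj ⟨v, hv⟩
      have hu : C u = v := congrArg Subtype.val hu
      rw [← hu]; exact hφr _
    obtain ⟨w, hw1, hw2⟩ := ih _ hlt N rfl (by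
      intro z' hz'
      exact Module.End.IsSemisimple.restrict (p := N.toSubmodule) (f := toEnd k L W z') (fun v hv => N.lie_mem hv) (hss z' hz')
      ) (φ.comp N.toSubmodule.subtype) (by
      intro h
      apply hφ
      ext v
      have : v ∈ LinearMap.ker C ⊔ q := by rw [hq2.sup_eq_top]; trivial
      obtain ⟨a, ha, b, hb, rfl⟩ := Submodule.mem_sup.1 this
      rw [map_add, hq3 b hb, add_zero]
      exact LinearMap.congr_fun h ⟨a, ha⟩) (by
      intro x v
      exact hinv x v)
    refine ⟨w, fun x => ?_, hw2⟩
    have := congrArg Subtype.val (hw1 x)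
    simpa using this
end LP

set_option linter.unusedSectionVars false
namespace LP
open Matrix MvPolynomial

section
variable {k : Type*} [Field k] {m : Type*} [Fintype m] [DecidableEq m]

abbrev Pol (m : Type*) (k : Type*) [Field k] := MvPolynomial ((m × m) ⊕ (m × m)) k

def Xm : Matrix m m (Pol m k) := fun i j => X (Sum.inl (i, j))
def Ym : Matrix m m (Pol m k) := fun i j => X (Sum.inr (i, j))

def evm {R : Type*} [CommRing R] [Algebra k R] (A B : Matrix m m R) : Pol m k →ₐ[k] R :=
  aeval (Sum.elim (fun q => A q.1 q.2) (fun q => B q.1 q.2))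

theorem evm_X {R : Type*} [CommRing R] [Algebra k R] (A B : Matrix m m R) :
    (Xm (k := k)).map (evm A B) = A := by
  ext i j; simp [Xm, evm]
theorem evm_Y {R : Type*} [CommRing R] [Algebra k R] (A B : Matrix m m R) :
    (Ym (k := k)).map (evm A B) = B := by
  ext i j; simp [Ym, evm]

theorem algHom_ext' {R : Type*} [CommRing R] [Algebra k R] {f g : Pol m k →ₐ[k] R}
    (h1 : Xm.map f = Xm.map g) (h2 : Ym.map f = Ym.map g) : f = g := by
  apply MvPolynomial.algHom_ext
  rintro (⟨i, j⟩ | ⟨i, j⟩)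
  · exact congrFun (congrFun h1 i) j
  · exact congrFun (congrFun h2 i) j

def ev (g : GL m k) : Pol m k →ₐ[k] k := evm (g : Matrix m m k) ((g⁻¹ : GL m k) : Matrix m m k)

theorem ev_eq (g : GL m k) (p : Pol m k) : ev g p = MvPolynomial.eval
            (Sum.elim (fun q => ((g : GL m k) : Matrix m m k) q.1 q.2)
              (fun q => (((g⁻¹ : GL m k)) : Matrix m m k) q.1 q.2)) p := by
  unfold ev evm
  rw [MvPolynomial.aeval_eq_eval]

def vI (S : Set (GL m k)) : Ideal (Pol m k) where
  carrier := {p | ∀ g ∈ S, ev g p = 0}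
  add_mem' := by intro a b ha hb g hg; rw [map_add, ha g hg, hb g hg, add_zero]
  zero_mem' := by intro g _; rw [map_zero]
  smul_mem' := by intro c a ha g hg; rw [smul_eq_mul, map_mul, ha g hg, mul_zero]

theorem mem_vI {S : Set (GL m k)} {p : Pol m k} : p ∈ vI S ↔ ∀ g ∈ S, ev g p = 0 := Iff.rfl

/-- constant matrices -/
def cm {ι κ : Type*} (A : Matrix ι κ k) : Matrix ι κ (Pol m k) := A.map C

def lt (g : GL m k) : Pol m k →ₐ[k] Pol m k := evm (cm (g : Matrix m m k) * Xm) (Ym * cm ((g⁻¹ : GL m k) : Matrix m m k))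
def rt (g : GL m k) : Pol m k →ₐ[k] Pol m k := evm (Xm * cm (g : Matrix m m k)) (cm ((g⁻¹ : GL m k) : Matrix m m k) * Ym)

theorem map_cm {R ι κ : Type*} [CommRing R] [Algebra k R] (f : Pol m k →ₐ[k] R) (A : Matrix ι κ k) :
    (cm A).map f = A.map (algebraMap k R) := by
  ext i j; exact f.commutes (A i j)

theorem map_mul' {R S ι κ τ : Type*} [Fintype κ] [CommRing R] [CommRing S] [Algebra k R] [Algebra k S] (f : R →ₐ[k] S)
    (A : Matrix ι κ R) (B : Matrix κ τ R) : (A * B).map f = A.map f * B.map f := by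
  exact Matrix.map_mul (f := (f : R →+* S)) 

theorem ev_lt (g h : GL m k) (p : Pol m k) : ev g (lt h p) = ev (h * g) p := by
  have : (ev g).comp (lt h) = ev (h * g) := by
    apply algHom_ext'
    · rw [AlgHom.coe_comp, ← Matrix.map_map, lt, evm_X, map_mul', map_cm, ev, evm_X, ev, evm_X]
      ext; simp
    · rw [AlgHom.coe_comp, ← Matrix.map_map, lt, evm_Y, map_mul', map_cm, ev, evm_Y, ev, evm_Y]
      ext; simp
  rw [← this]; rfl

theorem ev_rt (g h : GL m k) (p : Pol m k) : ev g (rt h p) = ev (g * h) p := by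
  have : (ev g).comp (rt h) = ev (g * h) := by
    apply algHom_ext'
    · rw [AlgHom.coe_comp, ← Matrix.map_map, rt, evm_X, map_mul', map_cm, ev, evm_X, ev, evm_X]
      ext; simp
    · rw [AlgHom.coe_comp, ← Matrix.map_map, rt, evm_Y, map_mul', map_cm, ev, evm_Y, ev, evm_Y]
      ext; simp
  rw [← this]; rfl

def Dv (A : Matrix m m k) : Derivation k (Pol m k) (Pol m k) :=
  mkDerivation k (Sum.elim (fun q => (Xm * cm A : Matrix m m (Pol m k)) q.1 q.2)
    (fun q => (-(cm A * Ym) : Matrix m m (Pol m k)) q.1 q.2))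

theorem Dv_X (A : Matrix m m k) : Xm.map (Dv A) = Xm * cm A := by
  ext1 i j; simp [Xm, Dv, mkDerivation_X]
theorem Dv_Y (A : Matrix m m k) : Ym.map (Dv A) = -(cm A * Ym) := by
  ext1 i j; simp [Ym, Dv, mkDerivation_X]

theorem der_ext {M : Type*} [AddCommGroup M] [Module k M] [Module (Pol m k) M] {D D' : Derivation k (Pol m k) M}
    (h1 : Xm.map D = Xm.map D') (h2 : Ym.map D = Ym.map D') : D = D' := by
  apply MvPolynomial.derivation_ext
  rintro (⟨i, j⟩ | ⟨i, j⟩)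
  · exact congrFun (congrFun h1 i) j
  · exact congrFun (congrFun h2 i) j

theorem der_mul {ι κ τ : Type*} [Fintype κ] (D : Derivation k (Pol m k) (Pol m k))
    (A : Matrix ι κ (Pol m k)) (B : Matrix κ τ (Pol m k)) :
    (A * B).map D = A.map D * B + A * B.map D := by
  ext1 i j
  simp only [Matrix.map_apply, Matrix.mul_apply, Matrix.add_apply, map_sum, Derivation.leibniz, smul_eq_mul, Finset.sum_add_distrib]
  rw [add_comm]
  congr 1
  exact Finset.sum_congr rfl fun _ _ => mul_comm _ _

theorem der_cm {ι κ : Type*} (D : Derivation k (Pol m k) (Pol m k)) (A : Matrix ι κ k) : (cm A).map D = 0 := by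
  ext1 i j
  simp [cm]

theorem cm_mul {ι κ τ : Type*} [Fintype κ] (A : Matrix ι κ k) (B : Matrix κ τ k) :
    (cm (A * B) : Matrix ι τ (Pol m k)) = (cm A : Matrix ι κ (Pol m k)) * (cm B : Matrix κ τ (Pol m k)) := Matrix.map_mul (f := C)
theorem cm_add {ι κ : Type*} (A B : Matrix ι κ k) : (cm (A + B) : Matrix ι κ (Pol m k)) = cm A + cm B := by
  ext1; simp [cm]
theorem cm_sub {ι κ : Type*} (A B : Matrix ι κ k) : (cm (A - B) : Matrix ι κ (Pol m k)) = cm A - cm B := by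
  ext1; simp [cm]
theorem cm_neg {ι κ : Type*} (A : Matrix ι κ k) : (cm (-A) : Matrix ι κ (Pol m k)) = -cm A := by
  ext1; simp [cm]
theorem cm_smul {ι κ : Type*} (c : k) (A : Matrix ι κ k) : (cm (c • A) : Matrix ι κ (Pol m k)) = c • cm A := by
  ext1; simp [cm, MvPolynomial.smul_eq_C_mul]
theorem cm_zero {ι κ : Type*} : (cm (0 : Matrix ι κ k) : Matrix ι κ (Pol m k)) = 0 := by
  ext1; simp [cm]
theorem cm_one {ι : Type*} [DecidableEq ι] : (cm (1 : Matrix ι ι k) : Matrix ι ι (Pol m k)) = 1 := by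
  ext1 i j; simp [cm, Matrix.one_apply]

theorem Dv_add (A B : Matrix m m k) : Dv (A + B) = Dv A + Dv B := by
  apply der_ext
  · have : Xm.map (Dv A + Dv B) = Xm.map (Dv A) + (Xm.map (Dv B)) := by ext1; simp
    rw [this, Dv_X, Dv_X, Dv_X, cm_add, mul_add]
  · have : Ym.map (Dv A + Dv B) = Ym.map (Dv A) + (Ym.map (Dv B)) := by ext1; simp
    rw [this, Dv_Y, Dv_Y, Dv_Y, cm_add, add_mul, neg_add]

theorem Dv_smul (c : k) (B : Matrix m m k) : Dv (c • B) = c • Dv B := by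
  apply der_ext
  · have : Xm.map (c • Dv B) = c • (Xm.map (Dv B)) := by ext1; simp
    rw [this, Dv_X, Dv_X, cm_smul, mul_smul_comm]
  · have : Ym.map (c • Dv B) = c • (Ym.map (Dv B)) := by ext1; simp
    rw [this, Dv_Y, Dv_Y, cm_smul, smul_mul_assoc, smul_neg]

theorem Dv_lie (A B : Matrix m m k) : Dv (A * B - B * A) = ⁅Dv A, Dv B⁆ := by
  have hc : ∀ M : Matrix m m (Pol m k), M.map (⁅Dv A, Dv B⁆ : Derivation k (Pol m k) (Pol m k)) = (M.map (Dv B)).map (Dv A) - (M.map (Dv A)).map (Dv B) := by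
    intro M; ext1 i j; simp [Derivation.commutator_apply]
  have hneg : ∀ (D : Derivation k (Pol m k) (Pol m k)) (M : Matrix m m (Pol m k)), (-M).map D = - M.map D := by
    intro D M; ext1 i j; simp
  apply der_ext
  · rw [hc, Dv_X, Dv_X, Dv_X, der_mul, der_mul, der_cm, der_cm, Dv_X, Dv_X, cm_sub, cm_mul, cm_mul]
    noncomm_ring
  · rw [hc, Dv_Y, Dv_Y, Dv_Y, hneg, hneg, der_mul, der_mul, der_cm, der_cm, Dv_Y, Dv_Y, cm_sub, cm_mul, cm_mul]
    noncomm_ring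

theorem der_comm {D D' : Derivation k (Pol m k) (Pol m k)} {f : Pol m k →ₐ[k] Pol m k}
    (h1 : (Xm.map f).map D = (Xm.map D').map f) (h2 : (Ym.map f).map D = (Ym.map D').map f) (p : Pol m k) :
    D (f p) = f (D' p) := by
  induction p using MvPolynomial.induction_on with
  | C a => rw [← MvPolynomial.algebraMap_eq, AlgHom.commutes, Derivation.map_algebraMap, Derivation.map_algebraMap, map_zero]
  | add p q hp hq => simp [hp, hq]
  | mul_X p i hp =>
    have hi : D (f (X i)) = f (D' (X i)) := by
      obtain (⟨i, j⟩ | ⟨i, j⟩) := i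
      · exact congrFun (congrFun h1 i) j
      · exact congrFun (congrFun h2 i) j
    simp [Derivation.leibniz, hp, hi]

theorem Dv_lt (A : Matrix m m k) (g : GL m k) (p : Pol m k) : Dv A (lt g p) = lt g (Dv A p) := by
  have hneg : ∀ (f : Pol m k →ₐ[k] Pol m k) (M : Matrix m m (Pol m k)), (-M).map f = - M.map f := by
    intro D M; ext1 i j; simp
  apply der_comm
  · rw [lt, evm_X, Dv_X, der_mul, map_mul', map_cm, der_cm, evm_X, Dv_X]
    simp only [zero_mul, zero_add, Matrix.mul_assoc]; rfl
  · rw [lt, evm_Y, Dv_Y, der_mul, hneg, map_mul', map_cm, der_cm, evm_Y, Dv_Y]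
    simp only [mul_zero, add_zero, Matrix.mul_assoc, Matrix.neg_mul]; rfl

theorem Dv_rt (A : Matrix m m k) (g : GL m k) (p : Pol m k) :
    Dv ((g : Matrix m m k) * A * ((g⁻¹ : GL m k) : Matrix m m k)) (rt g p) = rt g (Dv A p) := by
  have hneg : ∀ (f : Pol m k →ₐ[k] Pol m k) (M : Matrix m m (Pol m k)), (-M).map f = - M.map f := by
    intro D M; ext1 i j; simp
  have hg : (cm ((g⁻¹ : GL m k) : Matrix m m k) : Matrix m m (Pol m k)) * (cm (g : Matrix m m k) : Matrix m m (Pol m k)) = 1 := by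
    rw [← cm_mul, Units.inv_mul, cm_one]
  apply der_comm
  · rw [rt, evm_X, Dv_X, der_mul, map_mul', map_cm, der_cm, evm_X, Dv_X, cm_mul, cm_mul, mul_zero, add_zero,
      Matrix.mul_assoc, Matrix.mul_assoc _ _ (cm (g : Matrix m m k)), hg, Matrix.mul_one, Matrix.mul_assoc]; rfl
  · rw [rt, evm_Y, Dv_Y, der_mul, hneg, map_mul', map_cm, der_cm, evm_Y, Dv_Y, cm_mul, cm_mul, zero_mul, zero_add,
      Matrix.mul_neg, ← Matrix.mul_assoc, ← Matrix.mul_assoc, ← Matrix.mul_assoc, hg, Matrix.one_mul, Matrix.mul_assoc]; rfl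

/-- Lie algebra stabilising the vanishing ideal -/
def lieG (S : Set (GL m k)) : Set (Matrix m m k) := {A | ∀ p ∈ vI S, Dv A p ∈ vI S}

theorem lt_mem {G : Subgroup (GL m k)} {g : GL m k} (hg : g ∈ G) {p : Pol m k} (hp : p ∈ vI (G : Set (GL m k))) :
    lt g p ∈ vI (G : Set (GL m k)) := by
  intro h hh; rw [ev_lt]; exact hp _ (G.mul_mem hg hh)
theorem rt_mem {G : Subgroup (GL m k)} {g : GL m k} (hg : g ∈ G) {p : Pol m k} (hp : p ∈ vI (G : Set (GL m k))) :
    rt g p ∈ vI (G : Set (GL m k)) := by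
  intro h hh; rw [ev_rt]; exact hp _ (G.mul_mem hh hg)

theorem ad_mem {G : Subgroup (GL m k)} {g : GL m k} (hg : g ∈ G) {A : Matrix m m k} (hA : A ∈ lieG (G : Set (GL m k))) :
    (g : Matrix m m k) * A * ((g⁻¹ : GL m k) : Matrix m m k) ∈ lieG (G : Set (GL m k)) := by
  intro p hp h hh
  have h1 := Dv_rt A g (rt g⁻¹ p)
  have h2 : ev (h * g⁻¹ * g) p = ev h p := by simp
  have h3 : rt g (rt g⁻¹ p) = p := by
    have : (rt g).comp (rt g⁻¹) = AlgHom.id k (Pol m k) := by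
      apply algHom_ext'
      · rw [AlgHom.coe_comp, ← Matrix.map_map, rt, evm_X, map_mul', map_cm, rt, evm_X]
        change Xm * cm _ * cm _ = _
        rw [Matrix.mul_assoc, ← cm_mul, Units.mul_inv, cm_one, Matrix.mul_one]; ext; simp
      · rw [AlgHom.coe_comp, ← Matrix.map_map, rt, evm_Y, map_mul', map_cm, rt, evm_Y]
        change cm _ * (cm _ * Ym) = _
        rw [← Matrix.mul_assoc, ← cm_mul, inv_inv, Units.mul_inv, cm_one, Matrix.one_mul]; ext; simp
    exact AlgHom.congr_fun this p
  rw [h3] at h1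
  rw [h1]
  exact rt_mem hg (hA _ (rt_mem (G.inv_mem hg) hp)) h hh

theorem lieG_of_point {G : Subgroup (GL m k)} {g : GL m k} (hg : g ∈ G) {A : Matrix m m k}
    (hA : ∀ p ∈ vI (G : Set (GL m k)), ev g (Dv A p) = 0) : A ∈ lieG (G : Set (GL m k)) := by
  intro p hp h hh
  have : h = (h * g⁻¹) * g := by group
  rw [this, ← ev_lt, ← Dv_lt]
  exact hA _ (lt_mem (G.mul_mem hh (G.inv_mem hg)) hp)

end
end LP

set_option linter.unusedSectionVars false
namespace LP
open Matrix MvPolynomial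

section
variable {k : Type*} [Field k] {m : Type*} [Fintype m] [DecidableEq m]

def SS {A : Type*} [Ring A] [Algebra k A] (a : A) : Prop :=
  ∃ q : Polynomial k, Squarefree q ∧ Polynomial.aeval a q = 0

theorem SS.map {A B : Type*} [Ring A] [Algebra k A] [Ring B] [Algebra k B] (f : A →ₐ[k] B) {a : A}
    (h : SS (k := k) a) : SS (k := k) (f a) := by
  obtain ⟨q, h1, h2⟩ := h
  exact ⟨q, h1, by rw [Polynomial.aeval_algHom_apply, h2, map_zero]⟩

theorem SS_iff {V : Type*} [AddCommGroup V] [Module k V] [FiniteDimensional k V] (f : Module.End k V) :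
    SS (k := k) f ↔ f.IsSemisimple := by
  constructor
  · rintro ⟨q, h1, h2⟩
    exact Module.End.isSemisimple_of_squarefree_aeval_eq_zero h1 h2
  · intro h
    exact ⟨minpoly k f, h.minpoly_squarefree, minpoly.aeval k f⟩

theorem SS_mat {ι : Type*} [Fintype ι] [DecidableEq ι] (M : Matrix ι ι k) :
    SS (k := k) M ↔ Module.End.IsSemisimple (Matrix.toLin' M) := by
  rw [← SS_iff]
  constructor
  · intro h; exact h.map (Matrix.toLinAlgEquiv' (R := k) (n := ι)).toAlgHom
  · intro h
    have := h.map (Matrix.toLinAlgEquiv' (R := k) (n := ι)).symm.toAlgHom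
    have e : (Matrix.toLinAlgEquiv' (R := k) (n := ι)).symm.toAlgHom (Matrix.toLin' M) = M :=
      (Matrix.toLinAlgEquiv' (R := k) (n := ι)).symm_apply_apply M
    rwa [e] at this

theorem SS_add [CharZero k] {ι : Type*} [Fintype ι] [DecidableEq ι] {M N : Matrix ι ι k} (hM : SS (k := k) M) (hN : SS (k := k) N)
    (h : Commute M N) : SS (k := k) (M + N) := by
  rw [SS_mat] at *
  rw [map_add]
  refine Module.End.IsSemisimple.add_of_commute ?_ hM hN
  show _ * _ = _ * _
  have h2 := congrArg (Matrix.toLin') h.eq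
  rwa [Matrix.toLin'_mul, Matrix.toLin'_mul] at h2

theorem SS_blocks {ι κ : Type*} [Fintype ι] [DecidableEq ι] [Fintype κ] [DecidableEq κ] {M : Matrix ι ι k} {N : Matrix κ κ k}
    (hM : SS (k := k) M) (hN : SS (k := k) N) : SS (k := k) (fromBlocks M 0 0 N) := by
  classical
  obtain ⟨p, hp, hp'⟩ := hM
  obtain ⟨q, hq, hq'⟩ := hN
  have hpq : p * q ≠ 0 := mul_ne_zero hp.ne_zero hq.ne_zero
  refine ⟨UniqueFactorizationMonoid.radical (p * q), UniqueFactorizationMonoid.squarefree_radical, ?_⟩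
  have key : ∀ r : Polynomial k, Polynomial.aeval (fromBlocks M 0 0 N) r = fromBlocks (Polynomial.aeval M r) 0 0 (Polynomial.aeval N r) := by
    intro r
    induction r using Polynomial.induction_on' with
    | add p q hp hq => rw [map_add, hp, hq, fromBlocks_add]; simp
    | monomial i c =>
      have hpow : ∀ i, (fromBlocks M 0 0 N)^i = fromBlocks (M^i) 0 0 (N^i) := by
        intro i
        induction i with
        | zero => simp
        | succ i ih => rw [pow_succ, ih, fromBlocks_multiply]; simp [pow_succ]
      simp [Polynomial.aeval_monomial, hpow, ← Algebra.smul_def, fromBlocks_smul]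
  have h1 : Polynomial.aeval M (UniqueFactorizationMonoid.radical (p * q)) = 0 := by
    obtain ⟨c, hc⟩ : p ∣ UniqueFactorizationMonoid.radical (p * q) := by
      exact (UniqueFactorizationMonoid.dvd_radical_iff hp.isRadical hpq).2 (dvd_mul_right _ _)
    rw [hc, map_mul, hp', zero_mul]
  have h2 : Polynomial.aeval N (UniqueFactorizationMonoid.radical (p * q)) = 0 := by
    obtain ⟨c, hc⟩ : q ∣ UniqueFactorizationMonoid.radical (p * q) :=
      (UniqueFactorizationMonoid.dvd_radical_iff hq.isRadical hpq).2 (dvd_mul_left _ _)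
    rw [hc, map_mul, hq', zero_mul]
  rw [key, h1, h2]; simp

/-- Good polynomial representations -/
structure Good {ι : Type*} [Fintype ι] [DecidableEq ι] (P : Matrix ι ι (Pol m k))
    (d : Matrix m m k → Matrix ι ι k) : Prop where
  mul : ∀ g h : GL m k, P.map (ev (g * h)) = P.map (ev g) * P.map (ev h)
  one : P.map (ev 1) = 1
  der : ∀ A, P.map (Dv A) = P * cm (d A)
  ss : ∀ A, SS (k := k) A → SS (k := k) (d A)

theorem good_one : Good (m := m) (k := k) (1 : Matrix PUnit PUnit (Pol m k)) (fun _ => 0) where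
  mul g h := by ext; simp
  one := by ext; simp
  der A := by ext1; simp [cm_zero]
  ss A _ := ⟨Polynomial.X, Polynomial.irreducible_X.squarefree, by simp⟩

theorem good_X : Good (m := m) (k := k) Xm id where
  mul g h := by simp only [ev, evm_X]; simp
  one := by simp only [ev, evm_X]; simp
  der A := Dv_X A
  ss A h := h

theorem good_Y : Good (m := m) (k := k) Ymᵀ (fun A => -Aᵀ) where
  mul g h := by simp only [ev, transpose_map, evm_Y]; simp
  one := by simp only [ev, transpose_map, evm_Y]; simp
  der A := by
    rw [transpose_map, Dv_Y, transpose_neg, transpose_mul, cm_neg, Matrix.mul_neg]; rfl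
  ss A h := by
    obtain ⟨q, h1, h2⟩ := h
    have h3 : SS (k := k) Aᵀ := by
      refine ⟨q, h1, ?_⟩
      have : ∀ q : Polynomial k, Polynomial.aeval Aᵀ q = (Polynomial.aeval A q)ᵀ := by
        intro q
        induction q using Polynomial.induction_on' with
        | add p q hp hq => simp [hp, hq]
        | monomial i c => simp [Polynomial.aeval_monomial, ← Algebra.smul_def, transpose_pow]
      rw [this, h2, transpose_zero]
    rw [SS_mat] at h3 ⊢
    rw [map_neg]
    exact Module.End.isSemisimple_neg.2 h3

theorem good_sum {ι κ : Type*} [Fintype ι] [DecidableEq ι] [Fintype κ] [DecidableEq κ]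
    {P : Matrix ι ι (Pol m k)} {Q : Matrix κ κ (Pol m k)} {d e} (hP : Good P d) (hQ : Good Q e) :
    Good (fromBlocks P 0 0 Q) (fun A => fromBlocks (d A) 0 0 (e A)) where
  mul g h := by
    simp only [fromBlocks_map, hP.mul, hQ.mul, fromBlocks_multiply]
    simp
  one := by simp [fromBlocks_map, hP.one, hQ.one]
  der A := by
    have : (cm (fromBlocks (d A) 0 0 (e A)) : Matrix _ _ (Pol m k)) = fromBlocks (cm (d A)) 0 0 (cm (e A)) := by
      simp [cm, fromBlocks_map]
    rw [this, fromBlocks_map, fromBlocks_multiply, hP.der, hQ.der]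
    simp
  ss A h := SS_blocks (hP.ss A h) (hQ.ss A h)

open Kronecker in
theorem good_kron [CharZero k] {ι κ : Type*} [Fintype ι] [DecidableEq ι] [Fintype κ] [DecidableEq κ]
    {P : Matrix ι ι (Pol m k)} {Q : Matrix κ κ (Pol m k)} {d e} (hP : Good P d) (hQ : Good Q e) :
    Good (P ⊗ₖ Q) (fun A => d A ⊗ₖ (1 : Matrix κ κ k) + (1 : Matrix ι ι k) ⊗ₖ e A) where
  mul g h := by
    have hm : ∀ g : GL m k, (P ⊗ₖ Q).map (ev g) = P.map (ev g) ⊗ₖ Q.map (ev g) := by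
      intro g; ext ⟨i, i'⟩ ⟨j, j'⟩; simp
    rw [hm, hm, hm, hP.mul, hQ.mul, mul_kronecker_mul]
  one := by
    have hm : ∀ g : GL m k, (P ⊗ₖ Q).map (ev g) = P.map (ev g) ⊗ₖ Q.map (ev g) := by
      intro g; ext ⟨i, i'⟩ ⟨j, j'⟩; simp
    rw [hm, hP.one, hQ.one, one_kronecker_one]
  der A := by
    have h1 : (P ⊗ₖ Q).map (Dv A) = P.map (Dv A) ⊗ₖ Q + P ⊗ₖ Q.map (Dv A) := by
      ext1 ⟨i, i'⟩ ⟨j, j'⟩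
      simp [Derivation.leibniz, mul_comm, add_comm]
    have h2 : (cm (d A ⊗ₖ (1 : Matrix κ κ k)) : Matrix (ι × κ) (ι × κ) (Pol m k)) = (cm (d A) : Matrix ι ι (Pol m k)) ⊗ₖ (1 : Matrix κ κ (Pol m k)) := by
      rw [← cm_one]; ext1 ⟨i, i'⟩ ⟨j, j'⟩; simp [cm]
    have h3 : (cm ((1 : Matrix ι ι k) ⊗ₖ e A) : Matrix (ι × κ) (ι × κ) (Pol m k)) = (1 : Matrix ι ι (Pol m k)) ⊗ₖ (cm (e A) : Matrix κ κ (Pol m k)) := by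
      rw [← cm_one]; ext1 ⟨i, i'⟩ ⟨j, j'⟩; simp [cm]
    rw [h1, hP.der, hQ.der, cm_add, h2, h3, Matrix.mul_add, ← mul_kronecker_mul, ← mul_kronecker_mul, Matrix.mul_one, Matrix.mul_one]
  ss A h := by
    apply SS_add
    · obtain ⟨q, h1, h2⟩ := hP.ss A h
      refine ⟨q, h1, ?_⟩
      have : ∀ q : Polynomial k, Polynomial.aeval (d A ⊗ₖ (1 : Matrix κ κ k)) q = Polynomial.aeval (d A) q ⊗ₖ (1 : Matrix κ κ k) := by
        intro q
        have hpow : ∀ i, (d A ⊗ₖ (1 : Matrix κ κ k))^i = ((d A)^i) ⊗ₖ (1 : Matrix κ κ k) := by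
          intro i
          induction i with
          | zero => simp
          | succ i ih => rw [pow_succ, ih, ← mul_kronecker_mul]; simp [pow_succ]
        induction q using Polynomial.induction_on' with
        | add p q hp hq => simp [hp, hq, add_kronecker]
        | monomial i c => simp [Polynomial.aeval_monomial, ← Algebra.smul_def, hpow, smul_kronecker]
      rw [this, h2, zero_kronecker]
    · obtain ⟨q, h1, h2⟩ := hQ.ss A h
      refine ⟨q, h1, ?_⟩
      have : ∀ q : Polynomial k, Polynomial.aeval ((1 : Matrix ι ι k) ⊗ₖ e A) q = (1 : Matrix ι ι k) ⊗ₖ Polynomial.aeval (e A) q := by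
        intro q
        have hpow : ∀ i, ((1 : Matrix ι ι k) ⊗ₖ e A)^i = (1 : Matrix ι ι k) ⊗ₖ ((e A)^i) := by
          intro i
          induction i with
          | zero => simp
          | succ i ih => rw [pow_succ, ih, ← mul_kronecker_mul]; simp [pow_succ]
        induction q using Polynomial.induction_on' with
        | add p q hp hq => simp [hp, hq, kronecker_add]
        | monomial i c => simp [Polynomial.aeval_monomial, ← Algebra.smul_def, hpow, kronecker_smul]
      rw [this, h2, kronecker_zero]
    · show _ * _ = _ * _
      rw [← mul_kronecker_mul, ← mul_kronecker_mul]; simp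

theorem good_reindex {ι κ : Type*} [Fintype ι] [DecidableEq ι] [Fintype κ] [DecidableEq κ] (σ : ι ≃ κ)
    {P : Matrix ι ι (Pol m k)} {d} (hP : Good P d) :
    Good (reindex σ σ P) (fun A => reindex σ σ (d A)) where
  mul g h := by
    have : ∀ g : GL m k, (reindex σ σ P).map (ev g) = reindex σ σ (P.map (ev g)) := fun g => rfl
    rw [this, this, this, hP.mul]; simp [submatrix_mul_equiv]
  one := by
    have : ∀ g : GL m k, (reindex σ σ P).map (ev g) = reindex σ σ (P.map (ev g)) := fun g => rfl
    rw [this, hP.one]; simp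
  der A := by
    have h1 : (reindex σ σ P).map (Dv A) = reindex σ σ (P.map (Dv A)) := rfl
    have h2 : (cm (reindex σ σ (d A)) : Matrix κ κ (Pol m k)) = reindex σ σ (cm (d A)) := rfl
    rw [h1, hP.der, h2]; simp [submatrix_mul_equiv]
  ss A h := (hP.ss A h).map (Matrix.reindexAlgEquiv k k σ).toAlgHom

open Kronecker in
theorem coeff_aux.{u} {k : Type*} [Field k] [CharZero k] {m : Type u} [Fintype m] [DecidableEq m] (p : Pol m k) :
    ∃ (ι : Type u) (_ : Fintype ι) (_ : DecidableEq ι) (P : Matrix ι ι (Pol m k)) (d : Matrix m m k → Matrix ι ι k) (ξ F : ι → k),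
      Good P d ∧ p = ∑ i, ∑ j, C (ξ i * F j) * P i j := by
  induction p using MvPolynomial.induction_on with
  | C a =>
    refine ⟨PUnit, inferInstance, inferInstance, 1, _, fun _ => 1, fun _ => a, good_one, ?_⟩
    simp
  | add p q hp hq =>
    obtain ⟨ι, _, _, P, d, ξ, F, h1, h2⟩ := hp
    obtain ⟨κ, _, _, Q, e, ξ', F', h1', h2'⟩ := hq
    refine ⟨ι ⊕ κ, inferInstance, inferInstance, _, _, Sum.elim ξ ξ', Sum.elim F F', good_sum h1 h1', ?_⟩
    conv_lhs => rw [h2, h2']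
    simp [Fintype.sum_sum_type]
  | mul_X p i hp =>
    obtain ⟨ι, _, _, P, d, ξ, F, h1, h2⟩ := hp
    have main : ∀ (Q : Matrix m m (Pol m k)) (e) (hQ : Good Q e) (a b : m),
      ∃ (ι : Type u) (_ : Fintype ι) (_ : DecidableEq ι) (P : Matrix ι ι (Pol m k)) (d : Matrix m m k → Matrix ι ι k) (ξ F : ι → k),
      Good P d ∧ p * Q a b = ∑ i, ∑ j, C (ξ i * F j) * P i j := by
      intro Q e hQ a b
      refine ⟨ι × m, inferInstance, inferInstance, _, _, fun i => ξ i.1 * Pi.single (M := fun _ => k) a 1 i.2, fun i => F i.1 * Pi.single (M := fun _ => k) b 1 i.2,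
        good_kron h1 hQ, ?_⟩
      conv_lhs => rw [h2]
      simp only [Fintype.sum_prod_type, Matrix.kroneckerMap_apply]
      rw [Finset.sum_mul]
      refine Finset.sum_congr rfl fun i _ => ?_
      rw [Finset.sum_eq_single a, Finset.sum_mul]
      · refine Finset.sum_congr rfl fun j _ => ?_
        rw [Finset.sum_eq_single b]
        · simp; ring
        · intro b' _ hb; simp [Pi.single_eq_of_ne hb]
        · simp
      · intro b' _ hb; simp [Pi.single_eq_of_ne hb]
      · simp
    obtain (⟨a, b⟩ | ⟨a, b⟩) := i
    · exact main Xm _ good_X a b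
    · exact main Ymᵀ _ good_Y b a

theorem coeff [CharZero k] (p : Pol m k) :
    ∃ (s : ℕ) (P : Matrix (Fin s) (Fin s) (Pol m k)) (d : Matrix m m k → Matrix (Fin s) (Fin s) k) (ξ F : Fin s → k),
      Good P d ∧ ∀ g, ev g p = ξ ⬝ᵥ (P.map (ev g) *ᵥ F) := by
  obtain ⟨ι, _, _, P, d, ξ, F, h1, h2⟩ := coeff_aux p
  let σ := Fintype.equivFin ι
  refine ⟨Fintype.card ι, _, _, ξ ∘ σ.symm, F ∘ σ.symm, good_reindex σ h1, fun g => ?_⟩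
  conv_lhs => rw [h2]
  simp only [map_sum, map_mul, dotProduct, mulVec, Function.comp]
  rw [← σ.sum_comp]
  refine Finset.sum_congr rfl fun i _ => ?_
  rw [← σ.sum_comp, Finset.mul_sum]
  refine Finset.sum_congr rfl fun j _ => ?_
  have hC : ∀ a, ev g (C a) = a := fun a => (ev g).commutes a
  simp [hC]; ring

section
variable {ι : Type*} [Fintype ι] [DecidableEq ι] {P : Matrix ι ι (Pol m k)} {d : Matrix m m k → Matrix ι ι k}
theorem Good.d_eq (hP : Good P d) (A : Matrix m m k) : d A = (P.map (Dv A)).map (ev 1) := by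
  rw [hP.der, map_mul', hP.one, map_cm, Matrix.one_mul]; ext; simp
theorem Good.d_add (hP : Good P d) (A B : Matrix m m k) : d (A + B) = d A + d B := by
  rw [hP.d_eq, hP.d_eq A, hP.d_eq B, Dv_add]; ext; simp
theorem Good.d_smul (hP : Good P d) (c : k) (B : Matrix m m k) : d (c • B) = c • d B := by
  rw [hP.d_eq, hP.d_eq B, Dv_smul]; ext; simp
theorem Good.d_lie (hP : Good P d) (A B : Matrix m m k) : d (A * B - B * A) = d A * d B - d B * d A := by
  rw [hP.d_eq (A * B - B * A), Dv_lie]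
  have hc : P.map (⁅Dv A, Dv B⁆ : Derivation k (Pol m k) (Pol m k)) = (P.map (Dv B)).map (Dv A) - (P.map (Dv A)).map (Dv B) := by
    ext1 i j; simp [Derivation.commutator_apply]
  have hs : ∀ (f : Pol m k →ₐ[k] k) (M N : Matrix ι ι (Pol m k)), (M - N).map f = M.map f - N.map f := by
    intro D M N; ext1 i j; simp
  rw [hc, hP.der, hP.der, der_mul, der_mul, hP.der, hP.der, der_cm, der_cm, Matrix.mul_zero, add_zero, add_zero,
    hs, Matrix.mul_assoc, Matrix.mul_assoc, ← cm_mul, ← cm_mul, map_mul', map_mul', hP.one, map_cm, map_cm, Matrix.one_mul, Matrix.one_mul]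
  ext; simp
end
end
end LP

set_option linter.unusedSectionVars false
namespace LP

section
open Matrix LieAlgebra LieModule
attribute [local instance] LieRing.ofAssociativeRing
variable {k : Type*} [Field k] {m : Type*} [Fintype m] [DecidableEq m]

def gS (G : Subgroup (GL m k)) : LieSubalgebra k (Matrix m m k) where
  carrier := lieG (G : Set (GL m k))
  add_mem' := by
    intro a b ha hb p hp
    rw [Dv_add]; exact Ideal.add_mem _ (ha p hp) (hb p hp)
  zero_mem' := by
    intro p hp
    have : Dv (0 : Matrix m m k) = 0 := by
      have := Dv_smul (0 : k) (0 : Matrix m m k)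
      simpa using this
    rw [this]; exact Ideal.zero_mem _
  smul_mem' := by
    intro c a ha p hp
    rw [Dv_smul]
    exact (Submodule.restrictScalars k (vI (G : Set (GL m k)))).smul_mem c (ha p hp)
  lie_mem' := by
    intro a b ha hb p hp
    rw [LieRing.of_associative_ring_bracket, Dv_lie, Derivation.commutator_apply]
    exact Ideal.sub_mem _ (ha _ (hb p hp)) (hb _ (ha p hp))

theorem mem_gS {G : Subgroup (GL m k)} {A : Matrix m m k} : A ∈ gS G ↔ A ∈ lieG (G : Set (GL m k)) := Iff.rfl

def actHom (G : Subgroup (GL m k)) {ι : Type*} [Fintype ι] [DecidableEq ι] {P : Matrix ι ι (Pol m k)}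
    {d : Matrix m m k → Matrix ι ι k} (hP : Good P d) : gS G →ₗ⁅k⁆ Module.End k (ι → k) where
  toFun x := Matrix.toLin' (d x)
  map_add' x y := by
    show Matrix.toLin' (d ((x : Matrix m m k) + y)) = _
    rw [hP.d_add, map_add]
  map_smul' c x := by
    show Matrix.toLin' (d (c • (x : Matrix m m k))) = _
    rw [hP.d_smul, map_smul]; rfl
  map_lie' {x y} := by
    rw [LieSubalgebra.coe_bracket, LieRing.of_associative_ring_bracket, LieRing.of_associative_ring_bracket, hP.d_lie, map_sub,
      Matrix.toLin'_mul, Matrix.toLin'_mul]; rfl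

/-- stable subspaces are stable under the Lie algebra -/
theorem stable_lie {G : Subgroup (GL m k)} {ι : Type*} [Fintype ι] [DecidableEq ι] {P : Matrix ι ι (Pol m k)}
    {d : Matrix m m k → Matrix ι ι k} (hP : Good P d) (U : Submodule k (ι → k))
    (hU : ∀ g ∈ G, ∀ u ∈ U, P.map (ev g) *ᵥ u ∈ U) {A : Matrix m m k} (hA : A ∈ lieG (G : Set (GL m k)))
    {u : ι → k} (hu : u ∈ U) : d A *ᵥ u ∈ U := by
  by_contra hn
  obtain ⟨f, hf, hfU⟩ := Submodule.exists_le_ker_of_notMem hn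
  apply hf
  let q : Pol m k := ∑ i, ∑ j, MvPolynomial.C (f (Pi.single i 1) * u j) * P i j
  have hfe : ∀ v : ι → k, f v = ∑ i, f (Pi.single i 1) * v i := by
    intro v
    conv_lhs => rw [← Finset.univ_sum_single v]
    rw [map_sum]
    refine Finset.sum_congr rfl fun i _ => ?_
    have : (Pi.single i (v i) : ι → k) = v i • Pi.single i 1 := by
      rw [← Pi.single_smul]; simp
    rw [this, map_smul, smul_eq_mul, mul_comm]
  have hq : ∀ (L : Pol m k →ₗ[k] k), L q = f (P.map L *ᵥ u) := by
    intro L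
    rw [hfe]
    simp only [q, map_sum, mulVec, dotProduct, Finset.mul_sum]
    refine Finset.sum_congr rfl fun i _ => Finset.sum_congr rfl fun j _ => ?_
    rw [← MvPolynomial.smul_eq_C_mul, map_smul, smul_eq_mul, Matrix.map_apply]; ring
  have hqI : q ∈ vI (G : Set (GL m k)) := by
    intro g hg
    have := hq (ev g).toLinearMap
    exact this.trans (hfU (hU g hg u hu))
  have h1 := hA q hqI 1 G.one_mem
  have h2 := hq ((ev 1).toLinearMap ∘ₗ (Dv A : Pol m k →ₗ[k] Pol m k))
  rw [hP.d_eq]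
  exact h2.symm.trans h1

/-- complements -/
def Compl (G : Subgroup (GL m k)) : Prop := ∀ U : Submodule k (m → k), (∀ g ∈ G, ∀ u ∈ U, (g : Matrix m m k) *ᵥ u ∈ U) →
  ∃ C : Submodule k (m → k), (∀ g ∈ G, ∀ u ∈ C, (g : Matrix m m k) *ᵥ u ∈ C) ∧ IsCompl U C

theorem map_Xm_ev (g : GL m k) : (Xm (k := k)).map (ev g) = (g : Matrix m m k) := evm_X _ _

section
variable (G : Subgroup (GL m k))
abbrev stdRM : LieRingModule (gS G) (m → k) := LieRingModule.compLieHom (m → k) (actHom G good_X)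
attribute [local instance] stdRM
theorem std_lie (x : gS G) (v : m → k) : ⁅x, v⁆ = (x : Matrix m m k) *ᵥ v := rfl
abbrev stdLM : LieModule k (gS G) (m → k) := LieModule.compLieHom (m → k) (actHom G good_X)
attribute [local instance] stdLM

def tr {g : GL m k} (hg : g ∈ G) (M : LieSubmodule k (gS G) (m → k)) : LieSubmodule k (gS G) (m → k) :=
  { Submodule.comap (Matrix.toLin' (g : Matrix m m k)) M.toSubmodule with
    lie_mem := by
      intro x v hv
      have hv : (g : Matrix m m k) *ᵥ v ∈ M := hv
      show (g : Matrix m m k) *ᵥ ((x : Matrix m m k) *ᵥ v) ∈ M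
      have := M.lie_mem (x := (⟨_, ad_mem hg x.2⟩ : gS G)) hv
      change ((g : Matrix m m k) * (x : Matrix m m k) * ((g⁻¹ : GL m k) : Matrix m m k)) *ᵥ ((g : Matrix m m k) *ᵥ v) ∈ M at this
      convert this using 1
      rw [Matrix.mulVec_mulVec, Matrix.mulVec_mulVec, Matrix.mul_assoc _ _ (g : Matrix m m k), Units.inv_mul, Matrix.mul_one] }

theorem mem_tr {g : GL m k} (hg : g ∈ G) (M : LieSubmodule k (gS G) (m → k)) (v : m → k) :
    v ∈ tr G hg M ↔ (g : Matrix m m k) *ᵥ v ∈ M := Iff.rfl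

def trIso {g : GL m k} (hg : g ∈ G) : LieSubmodule k (gS G) (m → k) ≃o LieSubmodule k (gS G) (m → k) where
  toFun := tr G hg
  invFun := tr G (G.inv_mem hg)
  left_inv M := by ext v; rw [mem_tr, mem_tr, Matrix.mulVec_mulVec, Units.mul_inv, Matrix.one_mulVec]
  right_inv M := by ext v; rw [mem_tr, mem_tr, Matrix.mulVec_mulVec, Units.inv_mul, Matrix.one_mulVec]
  map_rel_iff' := by
    intro M N
    constructor
    · intro h v hv
      have := @h (((g⁻¹ : GL m k) : Matrix m m k) *ᵥ v)
      change (g : Matrix m m k) *ᵥ _ ∈ M → (g : Matrix m m k) *ᵥ _ ∈ N at this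
      rw [Matrix.mulVec_mulVec, Units.mul_inv, Matrix.one_mulVec] at this
      exact this hv
    · intro h v hv
      exact h hv

theorem std_atoms (hc : Compl G) : sSup {M : LieSubmodule k (gS G) (m → k) | IsAtom M} = ⊤ := by
  set U := sSup {M : LieSubmodule k (gS G) (m → k) | IsAtom M} with hU
  have htr : ∀ g (hg : g ∈ G), tr G hg U = U := by
    intro g hg
    show trIso G hg U = U
    rw [hU, OrderIso.map_sSup_eq_sSup_symm_preimage]
    congr 1
    ext M
    exact OrderIso.isAtom_iff _ _
  obtain ⟨C, hC, hUC⟩ := hc U.toSubmodule (by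
    intro g hg u hu
    have : u ∈ tr G hg U := by rw [htr g hg]; exact hu
    exact this)
  let C' : LieSubmodule k (gS G) (m → k) := { C with
    lie_mem := by
      intro x v hv
      exact stable_lie good_X C (by intro g hg u hu; rw [map_Xm_ev]; exact hC g hg u hu) x.2 hv }
  have hC0 : C' = ⊥ := by
    by_contra hne
    obtain ⟨M, hM, hMC⟩ := IsAtomic.eq_bot_or_exists_atom_le C' |>.resolve_left hne
    have hMU : M ≤ U := le_sSup hM
    apply hM.1
    rw [eq_bot_iff]
    intro v hv
    have := hUC.disjoint.le_bot (show v ∈ U.toSubmodule ⊓ C from ⟨hMU hv, hMC hv⟩)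
    exact (Submodule.mem_bot k).1 this
  rw [eq_top_iff]
  intro v _
  have hCb : C = ⊥ := by
    rw [eq_bot_iff]; intro w hw
    have : w ∈ C' := hw
    rw [hC0] at this
    exact this
  have := hUC.sup_eq_top
  rw [hCb, sup_bot_eq] at this
  have hv : v ∈ U.toSubmodule := by rw [this]; trivial
  exact hv

theorem std_faithful (x : gS G) (h : ∀ v : m → k, ⁅x, v⁆ = 0) : x = 0 := by
  apply Subtype.ext
  have : (x : Matrix m m k) = 0 := by
    apply Matrix.toLin'.injective
    apply LinearMap.ext
    intro v
    rw [map_zero]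
    exact h v
  exact this

theorem std_center [CharZero k] (hc : Compl G) (z : gS G) (hz : z ∈ center k (gS G)) : SS (k := k) (z : Matrix m m k) := by
  rw [SS_mat]
  exact center_semisimple (std_atoms G hc) z hz

theorem weyl_mat [CharZero k] (hc : Compl G) {ι : Type*} [Fintype ι] [DecidableEq ι] {P : Matrix ι ι (Pol m k)}
    {d : Matrix m m k → Matrix ι ι k} (hP : Good P d) (N : Submodule k (ι → k))
    (hN : ∀ A ∈ lieG (G : Set (GL m k)), ∀ w ∈ N, d A *ᵥ w ∈ N) (F : ι → k) (hF : F ∉ N)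
    (hFN : ∀ A ∈ lieG (G : Set (GL m k)), d A *ᵥ F ∈ N) :
    ∃ w, (∀ A ∈ lieG (G : Set (GL m k)), d A *ᵥ w = 0) ∧ ∃ c : k, c ≠ 0 ∧ w - c • F ∈ N := by
  obtain ⟨f, hf, hfN⟩ := Submodule.exists_le_ker_of_notMem hF
  have h1 := std_atoms G hc
  have h2 := std_faithful G
  have h3 := std_center G hc
  letI : LieRingModule (gS G) (ι → k) := LieRingModule.compLieHom (ι → k) (actHom G hP)
  haveI : LieModule k (gS G) (ι → k) := LieModule.compLieHom (ι → k) (actHom G hP)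
  have hl : ∀ (x : gS G) (v : ι → k), ⁅x, v⁆ = d x *ᵥ v := fun _ _ => rfl
  have hmem : ∀ x : gS G, ∀ v ∈ N ⊔ Submodule.span k {F}, d x *ᵥ v ∈ N := by
    intro x v hv
    obtain ⟨a, ha, b, hb, rfl⟩ := Submodule.mem_sup.1 hv
    obtain ⟨c, rfl⟩ := Submodule.mem_span_singleton.1 hb
    rw [Matrix.mulVec_add, Matrix.mulVec_smul]
    exact N.add_mem (hN _ x.2 _ ha) (N.smul_mem _ (hFN _ x.2))
  let M : LieSubmodule k (gS G) (ι → k) := { N ⊔ Submodule.span k {F} with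
    lie_mem := by
      intro x v hv
      exact (le_sup_left : N ≤ N ⊔ Submodule.span k {F}) (hmem x v hv) }
  have hFM : F ∈ M := (le_sup_right : _ ≤ N ⊔ Submodule.span k {F}) (Submodule.mem_span_singleton_self F)
  obtain ⟨w, hw1, hw2⟩ := weyl2 h1 h2 _ M rfl (by
    intro z hz
    have h4 := (SS_mat _).1 (hP.ss _ (h3 z hz))
    have h5 : N ⊔ Submodule.span k {F} ∈ Module.End.invtSubmodule (Matrix.toLin' (d z)) := by
      intro v hv
      exact (le_sup_left : N ≤ N ⊔ Submodule.span k {F}) (hmem z v hv)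
    exact Module.End.IsSemisimple.restrict h5 h4) (f ∘ₗ M.toSubmodule.subtype) (by
      intro h0
      exact hf (LinearMap.congr_fun h0 ⟨F, hFM⟩)) (by
      intro x v
      exact hfN (hmem x v.1 v.2))
  refine ⟨w, fun A hA => ?_, ?_⟩
  · exact congrArg Subtype.val (hw1 ⟨A, hA⟩)
  · obtain ⟨a, ha, b, hb, hab⟩ := Submodule.mem_sup.1 (show (w : ι → k) ∈ N ⊔ Submodule.span k {F} from w.2)
    obtain ⟨c, rfl⟩ := Submodule.mem_span_singleton.1 hb
    refine ⟨c, ?_, ?_⟩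
    · rintro rfl
      apply hw2
      show f w = 0
      rw [← hab, zero_smul, add_zero]
      exact hfN ha
    · rw [← hab, add_sub_cancel_right]; exact ha
end
end
end LP

set_option linter.unusedSectionVars false
namespace LP
section
open Polynomial TensorProduct

theorem exists_der {k F : Type*} [Field k] [CharZero k] [Field F] [Algebra k F] [Algebra.EssFiniteType k F]
    (q : F) (hq : Transcendental k q) : ∃ δ : Derivation k F F, δ q ≠ 0 := by
  let _ : Algebra k[X] F := (aeval q).toAlgebra
  have hmap : ∀ p : k[X], algebraMap k[X] F p = aeval q p := fun _ => rfl
  have : IsScalarTower k k[X] F := IsScalarTower.of_algebraMap_eq (by intro x; rw [hmap]; simp)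
  have hinj : Function.Injective (algebraMap k[X] F) := transcendental_iff_injective.1 hq
  have : FaithfulSMul k[X] F := (faithfulSMul_iff_algebraMap_injective _ _).2 hinj
  let _ : Algebra (FractionRing k[X]) F := FractionRing.liftAlgebra k[X] F
  have : IsScalarTower k[X] (FractionRing k[X]) F := inferInstance
  have : IsScalarTower k (FractionRing k[X]) F := IsScalarTower.of_algebraMap_eq (by
    intro x
    rw [IsScalarTower.algebraMap_apply k k[X] F, IsScalarTower.algebraMap_apply k[X] (FractionRing k[X]) F,
      IsScalarTower.algebraMap_apply k k[X] (FractionRing k[X])])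
  have : Algebra.EssFiniteType (FractionRing k[X]) F := Algebra.EssFiniteType.of_comp k _ _
  have : CharZero (FractionRing k[X]) := charZero_of_injective_algebraMap (FaithfulSMul.algebraMap_injective k _)
  have : Algebra.FormallySmooth (FractionRing k[X]) F := Algebra.FormallySmooth.of_perfectField
  have : Algebra.FormallySmooth k[X] (FractionRing k[X]) := Algebra.FormallySmooth.of_isLocalization (nonZeroDivisors k[X])
  have : Algebra.FormallySmooth k[X] F := Algebra.FormallySmooth.comp _ (FractionRing k[X]) _
  have hi : Function.Injective (KaehlerDifferential.mapBaseChange k k[X] F) := by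
    rw [injective_iff_map_eq_zero]
    intro x hx
    obtain ⟨x, rfl⟩ := (Algebra.H1Cotangent.exact_δ_mapBaseChange k k[X] F x).mp hx
    rw [Subsingleton.elim x 0, map_zero]
  have h1 : (1 : F) ⊗ₜ[k[X]] (KaehlerDifferential.D k k[X] X) ≠ 0 := by
    intro h0
    let dd : Derivation k k[X] k[X] := Polynomial.derivative'
    have := congrArg (LinearMap.lTensor F dd.liftKaehlerDifferential) h0
    have := congrArg (TensorProduct.rid k[X] F) this
    simp [dd] at this
  have h2 : KaehlerDifferential.D k F q ≠ 0 := by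
    intro h0
    apply h1
    apply hi
    rw [map_zero, KaehlerDifferential.mapBaseChange_tmul, KaehlerDifferential.map_D, hmap]
    simp [h0]
  obtain ⟨f, hf, -⟩ := Submodule.exists_le_ker_of_notMem (p := (⊥ : Submodule F (Ω[F⁄k]))) (by simpa using h2)
  exact ⟨f.compDer (KaehlerDifferential.D k F), hf⟩

/-- lifting a derivation -/
theorem exists_der_prime {k σ : Type*} [Field k] [CharZero k] [Finite σ] (P : Ideal (MvPolynomial σ k)) [P.IsPrime]
    (q : MvPolynomial σ k) (hq : ∀ c : k[X], c ≠ 0 → aeval q c ∉ P) :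
    ∃ D : Derivation k (MvPolynomial σ k) (MvPolynomial σ k), (∀ p ∈ P, D p ∈ P) ∧ D q ∉ P := by
  classical
  let R := MvPolynomial σ k
  let A := R ⧸ P
  let F := FractionRing A
  have : Algebra.EssFiniteType A F := Algebra.EssFiniteType.of_isLocalization F (nonZeroDivisors A)
  have : Algebra.EssFiniteType k F := Algebra.EssFiniteType.comp k A F
  let π : R →ₐ[k] F := (IsScalarTower.toAlgHom k A F).comp (Ideal.Quotient.mkₐ k P)
  have hπ : ∀ p : R, π p = 0 ↔ p ∈ P := by
    intro p
    show algebraMap A F (Ideal.Quotient.mk P p) = 0 ↔ _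
    rw [← Ideal.Quotient.eq_zero_iff_mem]
    exact map_eq_zero_iff _ (IsFractionRing.injective A F)
  have htr : Transcendental k (π q) := by
    rw [transcendental_iff]
    intro c hc
    by_contra hne
    apply hq c hne
    rw [← hπ, ← Polynomial.aeval_algHom_apply, hc]
  obtain ⟨δ, hδ⟩ := exists_der _ htr
  have := Fintype.ofFinite σ
  obtain ⟨b, hb⟩ := IsLocalization.exist_integer_multiples_of_finset (nonZeroDivisors A)
    (Finset.univ.image fun i : σ => δ (π (MvPolynomial.X i)))
  have hx : ∀ i : σ, ∃ r : R, π r = algebraMap A F b * δ (π (MvPolynomial.X i)) := by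
    intro i
    obtain ⟨a, ha⟩ := hb (δ (π (MvPolynomial.X i))) (Finset.mem_image_of_mem _ (Finset.mem_univ i))
    obtain ⟨r, rfl⟩ := Ideal.Quotient.mk_surjective a
    exact ⟨r, ha.trans (Algebra.smul_def (b : A) (δ (π (MvPolynomial.X i))))⟩
  choose r hr using hx
  let D := MvPolynomial.mkDerivation k r
  have key : ∀ p : R, π (D p) = algebraMap A F b * δ (π p) := by
    intro p
    induction p using MvPolynomial.induction_on with
    | C a =>
      rw [← MvPolynomial.algebraMap_eq, Derivation.map_algebraMap, AlgHom.commutes, Derivation.map_algebraMap, map_zero, mul_zero]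
    | add p q hp hq => simp [hp, hq, mul_add]
    | mul_X p i hp =>
      have hi : π (D (MvPolynomial.X i)) = algebraMap A F b * δ (π (MvPolynomial.X i)) := by
        rw [← hr i]; simp only [D, MvPolynomial.mkDerivation_X]
      rw [Derivation.leibniz, map_mul, Derivation.leibniz, map_add, smul_eq_mul, smul_eq_mul, map_mul, map_mul, hp, hi]
      simp only [smul_eq_mul]; ring
  refine ⟨D, fun p hp => ?_, fun h => ?_⟩
  · rw [← hπ, key, (hπ p).2 hp, map_zero, mul_zero]
  · rw [← hπ, key, mul_eq_zero] at h
    refine h.elim (fun h => ?_) hδ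
    have := (map_eq_zero_iff _ (IsFractionRing.injective A F)).1 h
    exact nonZeroDivisors.ne_zero b.2 this

theorem exists_der_radical {k σ : Type*} [Field k] [CharZero k] [Finite σ] (I : Ideal (MvPolynomial σ k)) (hI : I.IsRadical)
    (q : MvPolynomial σ k) (hq : ∀ c : k[X], c ≠ 0 → aeval q c ∉ I) :
    ∃ D : Derivation k (MvPolynomial σ k) (MvPolynomial σ k), (∀ p ∈ I, D p ∈ I) ∧ D q ∉ I := by
  classical
  have hfin : I.minimalPrimes.Finite := Ideal.finite_minimalPrimes_of_isNoetherianRing _ I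
  have hinf : sInf I.minimalPrimes = I := by rw [Ideal.sInf_minimalPrimes, hI.radical]
  obtain ⟨P, hP, hPq⟩ : ∃ P ∈ I.minimalPrimes, ∀ c : k[X], c ≠ 0 → aeval q c ∉ P := by
    by_contra hcon
    push Not at hcon
    choose! c hc0 hc using hcon
    apply hq (∏ P ∈ hfin.toFinset, c P)
    · exact Finset.prod_ne_zero_iff.2 fun P hP => hc0 P (hfin.mem_toFinset.1 hP)
    · refine hinf.le (Submodule.mem_sInf.2 ?_)
      intro P hP
      rw [map_prod]
      exact Ideal.mem_of_dvd _ (Finset.dvd_prod_of_mem _ (hfin.mem_toFinset.2 hP)) (hc P hP)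
  have hPp : P.IsPrime := hP.1.1
  obtain ⟨D, hD, hDq⟩ := exists_der_prime P q hPq
  have ht : ∃ t : MvPolynomial σ k, t ∉ P ∧ ∀ Q ∈ I.minimalPrimes, Q ≠ P → t ∈ Q := by
    have : ∀ Q ∈ I.minimalPrimes, Q ≠ P → ∃ t, t ∈ Q ∧ t ∉ P := by
      intro Q hQ hne
      by_contra hcon
      push Not at hcon
      exact hne (le_antisymm hcon (hP.2 hQ.1 hcon))
    choose! t ht using this
    refine ⟨∏ Q ∈ hfin.toFinset.erase P, t Q, ?_, ?_⟩
    · intro h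
      rw [hPp.prod_mem_iff] at h
      obtain ⟨Q, hQ, hQ'⟩ := h
      rw [Finset.mem_erase, hfin.mem_toFinset] at hQ
      exact (ht Q hQ.2 hQ.1).2 hQ'
    · intro Q hQ hne
      exact Ideal.mem_of_dvd _ (Finset.dvd_prod_of_mem _ (Finset.mem_erase.2 ⟨hne, hfin.mem_toFinset.2 hQ⟩)) (ht Q hQ hne).1
  obtain ⟨t, htP, htQ⟩ := ht
  refine ⟨t • D, fun p hp => ?_, fun h => ?_⟩
  · refine hinf.le (Submodule.mem_sInf.2 ?_)
    intro Q hQ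
    by_cases hne : Q = P
    · subst hne
      exact Ideal.mul_mem_left _ _ (hD p (hP.1.2 hp))
    · exact Ideal.mul_mem_right _ _ (htQ Q hQ hne)
  · have := hP.1.2 h
    rcases hPp.mem_or_mem this with h | h
    · exact htP h
    · exact hDq h
end
end LP

set_option linter.unusedSectionVars false
namespace LP
section
open Matrix MvPolynomial
variable {k : Type*} [Field k] {m : Type*} [Fintype m] [DecidableEq m]

theorem vI_radical (S : Set (GL m k)) : (vI S).IsRadical := by
  rintro p ⟨n, hn⟩ g hg
  have := hn g hg
  rw [map_pow] at this
  exact eq_zero_of_pow_eq_zero this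

theorem map_Xm_ev' (g : GL m k) : (Xm (k := k)).map (ev g) = (g : Matrix m m k) := evm_X _ _
theorem map_Ym_ev (g : GL m k) : (Ym (k := k)).map (ev g) = ((g⁻¹ : GL m k) : Matrix m m k) := evm_Y _ _

theorem alg_of_killed [CharZero k] (G : Subgroup (GL m k)) (q : Pol m k)
    (hq : ∀ A ∈ lieG (G : Set (GL m k)), Dv A q ∈ vI (G : Set (GL m k))) :
    ∃ c : Polynomial k, c ≠ 0 ∧ Polynomial.aeval q c ∈ vI (G : Set (GL m k)) := by
  by_contra hcon
  push Not at hcon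
  obtain ⟨D, hD, hDq⟩ := exists_der_radical _ (vI_radical _) q hcon
  rw [mem_vI] at hDq
  push Not at hDq
  obtain ⟨g, hg, hgq⟩ := hDq
  let E : Matrix m m k := (Xm.map D).map (ev g)
  let A : Matrix m m k := ((g⁻¹ : GL m k) : Matrix m m k) * E
  have hX : (Xm.map (Dv A)).map (ev g) = (Xm.map D).map (ev g) := by
    rw [Dv_X, map_mul', map_Xm_ev', map_cm]
    have : A.map (algebraMap k k) = A := by ext; simp
    rw [this, ← Matrix.mul_assoc, Units.mul_inv, Matrix.one_mul]
  have hY : (Ym.map (Dv A)).map (ev g) = (Ym.map D).map (ev g) := by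
    have h1 : ((Xm * Ym : Matrix m m (Pol m k)).map D).map (ev g) = 0 := by
      ext i j
      have h2 : ((Xm * Ym : Matrix m m (Pol m k)) i j - C ((1 : Matrix m m k) i j)) ∈ vI (G : Set (GL m k)) := by
        intro h hh
        rw [map_sub]
        have h3 : (Xm * Ym : Matrix m m (Pol m k)).map (ev h) = 1 := by
          rw [map_mul', map_Xm_ev', map_Ym_ev, Units.mul_inv]
        have h4 := congrFun (congrFun h3 i) j
        rw [Matrix.map_apply] at h4
        have hC : ∀ a, ev h (C a) = a := fun a => (ev h).commutes a
        rw [h4, hC, sub_self]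
      have h3 := hD _ h2 g hg
      rw [map_sub, MvPolynomial.derivation_C, sub_zero] at h3
      exact h3
    have hadd : ∀ M N : Matrix m m (Pol m k), (M + N).map (ev g) = M.map (ev g) + N.map (ev g) := by
      intro M N; ext; simp
    have hneg : ∀ M : Matrix m m (Pol m k), (-M).map (ev g) = -M.map (ev g) := by
      intro M; ext; simp
    rw [der_mul, hadd, map_mul', map_mul', map_Xm_ev', map_Ym_ev] at h1
    rw [Dv_Y, hneg, map_mul', map_cm, map_Ym_ev]
    have : A.map (algebraMap k k) = A := by ext; simp
    rw [this]
    have h5 := congrArg (fun M => ((g⁻¹ : GL m k) : Matrix m m k) * M) h1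
    simp only [Matrix.mul_add, ← Matrix.mul_assoc, Units.inv_mul, Matrix.one_mul, Matrix.mul_zero] at h5
    rw [neg_eq_iff_add_eq_zero]
    exact h5
  have key : ∀ p : Pol m k, ev g (Dv A p) = ev g (D p) := by
    intro p
    induction p using MvPolynomial.induction_on with
    | C a => simp
    | add p q hp hq => simp [hp, hq]
    | mul_X p i hp =>
      have hi : ev g (Dv A (X i)) = ev g (D (X i)) := by
        obtain (⟨i, j⟩ | ⟨i, j⟩) := i
        · exact congrFun (congrFun hX i) j
        · exact congrFun (congrFun hY i) j
      rw [Derivation.leibniz, Derivation.leibniz]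
      simp only [map_add, smul_eq_mul, map_mul, hp, hi]
  have hA : A ∈ lieG (G : Set (GL m k)) := lieG_of_point hg (by
    intro p hp; rw [key]; exact hD p hp g hg)
  apply hgq
  rw [← key]
  exact hq A hA g hg

theorem finite_values [CharZero k] (G : Subgroup (GL m k)) (q : Pol m k)
    (hq : ∀ A ∈ lieG (G : Set (GL m k)), Dv A q ∈ vI (G : Set (GL m k))) :
    ((fun g => ev g q) '' (G : Set (GL m k))).Finite := by
  obtain ⟨c, hc, hcq⟩ := alg_of_killed G q hq
  refine (Polynomial.finite_setOfPred_isRoot hc).subset ?_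
  rintro _ ⟨g, hg, rfl⟩
  have := hcq g hg
  rw [← Polynomial.aeval_algHom_apply] at this
  simpa [Polynomial.IsRoot] using this
end
end LP

set_option linter.unusedSectionVars false
namespace LP
section
open Matrix MvPolynomial
variable {k : Type*} [Field k] {m : Type*} [Fintype m] [DecidableEq m]

def ivt : Pol m k →ₐ[k] Pol m k := evm Ym Xm

theorem ev_ivt (g : GL m k) (p : Pol m k) : ev g (ivt p) = ev g⁻¹ p := by
  have : (ev g).comp ivt = ev g⁻¹ := by
    apply algHom_ext'
    · rw [AlgHom.coe_comp, ← Matrix.map_map, ivt, evm_X, map_Xm_ev', map_Ym_ev]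
    · rw [AlgHom.coe_comp, ← Matrix.map_map, ivt, evm_Y, map_Xm_ev', map_Ym_ev, inv_inv]
  rw [← this]; rfl

theorem separate [CharZero k] (H : Subgroup (GL m k)) (g : GL m k) (p : Pol m k) (hp : p ∈ vI (H : Set (GL m k)))
    (hg : ev g p ≠ 0) : ∃ a : Pol m k, (∀ h ∈ H, ev h a = 0) ∧ ∀ h, g⁻¹ * h ∈ H → ev h a = 1 := by
  obtain ⟨s, P, d, ξ, F, hP, hpe⟩ := coeff p
  let B : Submodule k (Fin s → k) := Submodule.span k {v | ∃ h ∈ H, v = P.map (ev h⁻¹) *ᵥ F}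
  obtain ⟨f, hf⟩ := Submodule.exists_isCompl B
  let Q : (Fin s → k) →ₗ[k] (Fin s → k) := B.subtype ∘ₗ B.projectionOnto f hf
  have hQ1 : ∀ v ∈ B, Q v = v := by
    intro v hv
    show ((B.projectionOnto f hf v : B) : Fin s → k) = v
    rw [Submodule.projectionOnto_apply_left hf ⟨v, hv⟩]
  have hQ2 : ∀ v, Q v ∈ B := fun v => (B.projectionOnto f hf v).2
  have hC : ∀ (h : GL m k) a, ev h (C a) = a := fun h a => (ev h).commutes a
  -- the orthogonality
  have horth : ∀ h ∈ H, ∀ v ∈ B, ξ ⬝ᵥ (P.map (ev h) *ᵥ v) = 0 := by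
    intro h hh v hv
    induction hv using Submodule.span_induction with
    | mem v hv =>
      obtain ⟨h', hh', rfl⟩ := hv
      rw [Matrix.mulVec_mulVec, ← hP.mul, ← hpe]
      exact hp _ (H.mul_mem hh (H.inv_mem hh'))
    | zero => simp
    | add x y _ _ hx hy => rw [mulVec_add, dotProduct_add, hx, hy, add_zero]
    | smul c x _ hx => rw [mulVec_smul, dotProduct_smul, hx, smul_zero]
  let M : Matrix (Fin s) (Fin s) k := LinearMap.toMatrix' Q
  have hM : ∀ v, M *ᵥ v = Q v := fun v => by simp [M, LinearMap.toMatrix'_mulVec]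
  let β : Fin s → Pol m k := fun j => ∑ l, C (F l) * lt g⁻¹ (ivt (P j l))
  have hβ : ∀ h, (fun j => ev h (β j)) = P.map (ev (h⁻¹ * g)) *ᵥ F := by
    intro h
    ext j
    simp only [β, map_sum, map_mul, hC, ev_lt, ev_ivt, _root_.mul_inv_rev, inv_inv, mulVec, dotProduct, Matrix.map_apply]
    exact Finset.sum_congr rfl fun _ _ => mul_comm _ _
  let α : Fin s → Pol m k := fun j => ∑ i, ∑ l, C (ξ i * M l j) * P i l
  have hα : ∀ h (v : Fin s → k), (fun j => ev h (α j)) ⬝ᵥ v = ξ ⬝ᵥ (P.map (ev h) *ᵥ (Q v)) := by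
    intro h v
    rw [← hM, Matrix.mulVec_mulVec, dotProduct_mulVec]
    congr 1
    ext j
    simp only [α, map_sum, map_mul, hC, vecMul, dotProduct, Matrix.mul_apply, Matrix.map_apply, Finset.mul_sum]
    exact Finset.sum_congr rfl fun _ _ => Finset.sum_congr rfl fun _ _ => by ring
  have hs : ∀ h, ev h (∑ j, α j * β j) = ξ ⬝ᵥ (P.map (ev h) *ᵥ (Q (P.map (ev (h⁻¹ * g)) *ᵥ F))) := by
    intro h
    rw [← hα, ← hβ]
    simp [dotProduct]
  refine ⟨C ((ev g p)⁻¹) * ∑ j, α j * β j, fun h hh => ?_, fun h hh => ?_⟩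
  · rw [map_mul, hs, horth h hh _ (hQ2 _), mul_zero]
  · rw [map_mul, hs, hC, hQ1, Matrix.mulVec_mulVec, ← hP.mul, ← hpe, mul_inv_cancel_left, inv_mul_cancel₀ hg]
    apply Submodule.subset_span
    exact ⟨_, hh, by rw [_root_.mul_inv_rev, inv_inv]⟩
end
end LP

set_option linter.unusedSectionVars false
namespace LP
section
open Matrix MvPolynomial
variable {k : Type*} [Field k] {m : Type*} [Fintype m] [DecidableEq m]

theorem clear_den (p : Pol m k) : ∃ (p' : MvPolynomial (m × m) k) (N : ℕ), ∀ g : GL m k,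
    MvPolynomial.eval (fun q => (g : Matrix m m k) q.1 q.2) p' = (g : Matrix m m k).det ^ N * ev g p := by
  have hX : ∀ g : GL m k, (mvPolynomialX m m k).map (MvPolynomial.eval (fun q => (g : Matrix m m k) q.1 q.2)) = (g : Matrix m m k) := by
    intro g; ext i j; simp [mvPolynomialX]
  have hd : ∀ g : GL m k, MvPolynomial.eval (fun q => (g : Matrix m m k) q.1 q.2) (mvPolynomialX m m k).det = (g : Matrix m m k).det := by
    intro g; rw [RingHom.map_det, RingHom.mapMatrix_apply, hX]
  have ha : ∀ (g : GL m k) i j, MvPolynomial.eval (fun q => (g : Matrix m m k) q.1 q.2) ((mvPolynomialX m m k).adjugate i j) = (g : Matrix m m k).det * ((g⁻¹ : GL m k) : Matrix m m k) i j := by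
    intro g i j
    have h1 := RingHom.map_adjugate (MvPolynomial.eval (fun q => (g : Matrix m m k) q.1 q.2)) (mvPolynomialX m m k)
    rw [RingHom.mapMatrix_apply, RingHom.mapMatrix_apply, hX] at h1
    have h2 : ((g : Matrix m m k)).adjugate = (g : Matrix m m k).det • ((g⁻¹ : GL m k) : Matrix m m k) := by
      have h3 : (g : Matrix m m k).adjugate * ((g : Matrix m m k) * ((g⁻¹ : GL m k) : Matrix m m k)) = (g : Matrix m m k).det • ((g⁻¹ : GL m k) : Matrix m m k) := by
        rw [← Matrix.mul_assoc, Matrix.adjugate_mul, Matrix.smul_mul, Matrix.one_mul]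
      rwa [← Units.val_mul, mul_inv_cancel, Units.val_one, Matrix.mul_one] at h3
    rw [h2] at h1
    exact congrFun (congrFun h1 i) j
  have hC : ∀ (h : GL m k) a, ev h (C a) = a := fun h a => (ev h).commutes a
  induction p using MvPolynomial.induction_on with
  | C a => exact ⟨C a, 0, fun g => by rw [hC]; simp⟩
  | add p q hp hq =>
    obtain ⟨p', N, hp⟩ := hp
    obtain ⟨q', M, hq⟩ := hq
    refine ⟨p' * (mvPolynomialX m m k).det ^ M + q' * (mvPolynomialX m m k).det ^ N, N + M, fun g => ?_⟩
    rw [map_add, map_mul, map_mul, map_pow, map_pow, hd, hp, hq, map_add]; ring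
  | mul_X p v hp =>
    obtain ⟨p', N, hp⟩ := hp
    rcases v with ⟨i, j⟩ | ⟨i, j⟩
    · refine ⟨p' * X (i, j), N, fun g => ?_⟩
      rw [map_mul, map_mul, hp, eval_X]
      simp [ev, evm, mul_assoc]
    · refine ⟨p' * (mvPolynomialX m m k).adjugate i j, N + 1, fun g => ?_⟩
      rw [map_mul, map_mul, hp, ha]
      have : ev g (X (Sum.inr (i, j))) = ((g⁻¹ : GL m k) : Matrix m m k) i j := by simp [ev, evm]
      rw [this]; ring

theorem zar_eq : zariskiGL m k = TopologicalSpace.generateFrom {U | ∃ p : Pol m k, U = {g : GL m k | ev g p ≠ 0}} := by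
  apply le_antisymm
  · apply le_generateFrom
    rintro U ⟨p, rfl⟩
    obtain ⟨p', N, h⟩ := clear_den p
    have : {g : GL m k | ev g p ≠ 0} = (fun g : GL m k => ((g : Matrix m m k), ((g⁻¹ : GL m k) : Matrix m m k))) ⁻¹'
      (Prod.fst ⁻¹' {M : Matrix m m k | MvPolynomial.eval (fun q => M q.1 q.2) p' ≠ 0}) := by
      ext g
      have hdet : (g : Matrix m m k).det ≠ 0 := (g.isUnit.map (Matrix.detMonoidHom)).ne_zero
      simp only [Set.mem_setOf_eq, Set.mem_preimage, h]
      simp [hdet]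
    show @IsOpen _ (zariskiGL m k) _
    rw [this]
    letI := zariskiMat m k
    apply isOpen_induced
    apply IsOpen.preimage continuous_fst
    exact TopologicalSpace.isOpen_generateFrom_of_mem ⟨p', rfl⟩
  · letI := zariskiMat m k
    letI : TopologicalSpace (GL m k) := TopologicalSpace.generateFrom {U | ∃ p : Pol m k, U = {g : GL m k | ev g p ≠ 0}}
    show this ≤ _
    unfold zariskiGL
    rw [← continuous_iff_le_induced]
    apply Continuous.prodMk
    · apply continuous_generateFrom_iff.2
      rintro U ⟨p, rfl⟩
      apply TopologicalSpace.isOpen_generateFrom_of_mem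
      refine ⟨rename Sum.inl p, ?_⟩
      ext g; simp [ev_eq, eval_rename, Function.comp_def]
    · apply continuous_generateFrom_iff.2
      rintro U ⟨p, rfl⟩
      apply TopologicalSpace.isOpen_generateFrom_of_mem
      refine ⟨rename Sum.inr p, ?_⟩
      ext g; simp [ev_eq, eval_rename, Function.comp_def]

attribute [local instance] zariskiGL

theorem zar_basis : TopologicalSpace.IsTopologicalBasis {U | ∃ p : Pol m k, U = {g : GL m k | ev g p ≠ 0}} := by
  apply TopologicalSpace.isTopologicalBasis_of_subbasis_of_finiteInter zar_eq
  constructor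
  · exact ⟨1, by ext; simp⟩
  · rintro _ ⟨p, rfl⟩ _ ⟨q, rfl⟩
    exact ⟨p * q, by ext; simp⟩

theorem isClosed_zero (p : Pol m k) : IsClosed {g : GL m k | ev g p = 0} := by
  rw [← isOpen_compl_iff]
  exact zar_basis.isOpen ⟨p, rfl⟩

theorem exists_of_closed {Z : Set (GL m k)} (hZ : IsClosed Z) {g : GL m k} (hg : g ∉ Z) : ∃ p ∈ vI Z, ev g p ≠ 0 := by
  obtain ⟨_, ⟨p, rfl⟩, h1, h2⟩ := zar_basis.exists_subset_of_mem_open (show g ∈ Zᶜ from hg) hZ.isOpen_compl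
  refine ⟨p, fun h hh => ?_, h1⟩
  by_contra hne
  exact h2 hne hh

theorem noeth : TopologicalSpace.NoetherianSpace (GL m k) := by
  refine ((TopologicalSpace.noetherianSpace_TFAE (GL m k)).out 0 1 : TopologicalSpace.NoetherianSpace (GL m k) ↔ WellFoundedLT (TopologicalSpace.Closeds (GL m k))).2 ?_
  let φ : TopologicalSpace.Closeds (GL m k) → (Ideal (Pol m k))ᵒᵈ := fun Z => OrderDual.toDual (vI (Z : Set (GL m k)))
  have hφ : StrictMono φ := by
    intro Z W h
    have h' : (Z : Set (GL m k)) ⊂ W := h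
    show vI (W : Set (GL m k)) < vI (Z : Set _)
    refine lt_of_le_not_ge (fun p hp g hg => hp g (h'.1 hg)) fun hle => ?_
    obtain ⟨g, hg, hgn⟩ := Set.exists_of_ssubset h'
    obtain ⟨p, hp, hpg⟩ := exists_of_closed Z.isClosed hgn
    exact hpg (hle hp g hg)
  have : WellFoundedLT ((Ideal (Pol m k))ᵒᵈ) := inferInstance
  exact hφ.wellFoundedLT

theorem cont_left (h : GL m k) : Continuous (fun g : GL m k => h * g) := by
  rw [zar_basis.continuous_iff]
  rintro _ ⟨p, rfl⟩
  exact zar_basis.isOpen ⟨lt h p, by ext g; simp [ev_lt]⟩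

theorem fin_cc (G : Subgroup (GL m k)) : Finite (ConnectedComponents G) := by
  have := noeth (m := m) (k := k)
  have : TopologicalSpace.NoetherianSpace G := Topology.IsInducing.noetherianSpace (i := (Subtype.val : G → GL m k)) Topology.IsInducing.subtypeVal
  have hf := TopologicalSpace.NoetherianSpace.finite_irreducibleComponents (α := G)
  have : Finite (irreducibleComponents G) := hf
  have hne : ∀ Z : irreducibleComponents G, (Z : Set G).Nonempty := fun Z => Z.2.1.1
  apply Finite.of_surjective (fun Z : irreducibleComponents G => (ConnectedComponents.mk (hne Z).some : ConnectedComponents G))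
  intro c
  obtain ⟨x, rfl⟩ := ConnectedComponents.surjective_coe c
  refine ⟨⟨irreducibleComponent x, irreducibleComponent_mem_irreducibleComponents x⟩, ?_⟩
  apply ConnectedComponents.coe_eq_coe'.2
  have h1 : IsPreconnected (irreducibleComponent x) := isIrreducible_irreducibleComponent.isPreirreducible.isPreconnected
  exact h1.subset_connectedComponent mem_irreducibleComponent (hne ⟨irreducibleComponent x, irreducibleComponent_mem_irreducibleComponents x⟩).some_mem

theorem const_of_finite {G : Subgroup (GL m k)} (q : Pol m k) (hq : ((fun g => ev g q) '' (G : Set (GL m k))).Finite)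
    {g : GL m k} (hg : g ∈ connectedComponentIn (G : Set (GL m k)) 1) : ev g q = ev 1 q := by
  have hpre : IsPreconnected (connectedComponentIn (G : Set (GL m k)) 1) := isPreconnected_connectedComponentIn
  have h1 : (1 : GL m k) ∈ connectedComponentIn (G : Set (GL m k)) 1 := mem_connectedComponentIn G.one_mem
  by_contra hne
  let T := ((fun g => ev g q) '' (G : Set (GL m k))) \ {ev 1 q}
  have hT : T.Finite := hq.subset Set.diff_subset
  have hlev : ∀ c : k, IsClosed {g : GL m k | ev g q = c} := by
    intro c
    convert isClosed_zero (q - C c) using 1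
    ext g
    have : ev g (C c) = c := (ev g).commutes c
    simp [sub_eq_zero, this]
  have hc2 : IsClosed (⋃ c ∈ T, {g : GL m k | ev g q = c}) := hT.isClosed_biUnion fun c _ => hlev c
  have := (isPreconnected_closed_iff.1 hpre) _ _ (hlev (ev 1 q)) hc2 (fun x hx => ?_) ⟨1, h1, rfl⟩ ⟨g, hg, ?_⟩
  · obtain ⟨x, -, hx1, hx2⟩ := this
    simp only [Set.mem_iUnion] at hx2
    obtain ⟨c, hc, hxc⟩ := hx2
    exact hc.2 (hxc.symm.trans hx1)
  · by_cases hx1 : ev x q = ev 1 q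
    · exact Or.inl hx1
    · right
      simp only [Set.mem_iUnion]
      exact ⟨ev x q, ⟨⟨x, connectedComponentIn_subset _ _ hx, rfl⟩, hx1⟩, rfl⟩
  · simp only [Set.mem_iUnion]
    exact ⟨ev g q, ⟨⟨g, connectedComponentIn_subset _ _ hg, rfl⟩, hne⟩, rfl⟩
end
end LP

set_option linter.unusedSectionVars false
namespace LP
section
open Matrix MvPolynomial
variable {k : Type*} [Field k] {m : Type*} [Fintype m] [DecidableEq m]
attribute [local instance] zariskiGL

theorem cc_mul {G : Subgroup (GL m k)} (g : G) {a b : G} (h : a ∈ connectedComponent b) :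
    g * a ∈ connectedComponent (g * b) := by
  have hc : Continuous (fun x : G => g * x) :=
    Continuous.subtype_mk ((cont_left (g : GL m k)).comp continuous_subtype_val) _
  exact hc.mapsTo_connectedComponent b h

def H0 (G : Subgroup (GL m k)) : Subgroup G where
  carrier := connectedComponent (1 : G)
  one_mem' := mem_connectedComponent
  mul_mem' := by
    intro a b ha hb
    have := cc_mul a hb
    rw [mul_one, ← connectedComponent_eq ha] at this
    exact this
  inv_mem' := by
    intro a ha
    have := cc_mul a⁻¹ ha
    rw [inv_mul_cancel, mul_one] at this
    rw [← connectedComponent_eq this]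
    exact mem_connectedComponent

theorem mem_H0 {G : Subgroup (GL m k)} {g : G} : g ∈ H0 G ↔ g ∈ connectedComponent (1 : G) := Iff.rfl

theorem indicator [CharZero k] (G : Subgroup (GL m k)) (hG : IsClosed (G : Set (GL m k)))
    (hn : ¬ IsConnected (G : Set (GL m k))) :
    ∃ f : Pol m k, ev 1 f = 1 ∧ (∃ g ∈ G, ev g f = 0) ∧ ∀ g ∈ G, ev g f = 0 ∨ ev g f = 1 := by
  classical
  have := fin_cc G
  have := Fintype.ofFinite (ConnectedComponents G)
  let H : Subgroup (GL m k) := (H0 G).map G.subtype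
  have hHcl : IsClosed (H : Set (GL m k)) := by
    have := hG.isClosedEmbedding_subtypeVal.isClosedMap _ (isClosed_connectedComponent (x := (1 : G)))
    exact this
  have key : ∀ c : ConnectedComponents G, c ≠ ((1 : G) : ConnectedComponents G) →
      ∃ a : Pol m k, (∀ h ∈ H, ev h a = 0) ∧ ∀ h : G, (h : ConnectedComponents G) = c → ev (h : GL m k) a = 1 := by
    intro c hc
    obtain ⟨x, rfl⟩ := ConnectedComponents.surjective_coe c
    have hx : (x : GL m k) ∉ H := by
      rintro ⟨y, hy, hyx⟩
      have : y = x := Subtype.ext hyx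
      subst this
      exact hc (ConnectedComponents.coe_eq_coe'.2 hy)
    obtain ⟨p, hp, hpx⟩ := exists_of_closed hHcl hx
    obtain ⟨a, ha, ha'⟩ := separate H (x : GL m k) p hp hpx
    refine ⟨a, ha, fun h hh => ha' h ?_⟩
    have h1 := cc_mul x⁻¹ (ConnectedComponents.coe_eq_coe'.1 hh)
    rw [inv_mul_cancel] at h1
    exact ⟨x⁻¹ * h, h1, rfl⟩
  choose! a ha ha' using key
  have hf : ∀ g, ev g (∏ c ∈ Finset.univ.erase ((1 : G) : ConnectedComponents G), (1 - a c)) =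
      ∏ c ∈ Finset.univ.erase ((1 : G) : ConnectedComponents G), (1 - ev g (a c)) := by
    intro g; simp [map_prod]
  have hone : ∀ g ∈ H, ev g (∏ c ∈ Finset.univ.erase ((1 : G) : ConnectedComponents G), (1 - a c)) = 1 := by
    intro g hg
    rw [hf]
    apply Finset.prod_eq_one
    intro c hc
    rw [ha c (Finset.ne_of_mem_erase hc) g hg, sub_zero]
  have hzero : ∀ g : G, g ∉ H0 G → ev (g : GL m k) (∏ c ∈ Finset.univ.erase ((1 : G) : ConnectedComponents G), (1 - a c)) = 0 := by
    intro g hg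
    have hc : (g : ConnectedComponents G) ≠ ((1 : G) : ConnectedComponents G) := fun h => hg (ConnectedComponents.coe_eq_coe'.1 h)
    rw [hf]
    apply Finset.prod_eq_zero (Finset.mem_erase.2 ⟨hc, Finset.mem_univ _⟩)
    rw [ha' _ hc g rfl, sub_self]
  refine ⟨_, hone 1 H.one_mem, ?_, ?_⟩
  · have : ∃ g : G, g ∉ H0 G := by
      by_contra hcon
      push Not at hcon
      apply hn
      rw [isConnected_iff_connectedSpace]
      exact connectedSpace_iff_connectedComponent.2 ⟨1, Set.eq_univ_of_forall hcon⟩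
    obtain ⟨g, hg⟩ := this
    exact ⟨g, g.2, hzero g hg⟩
  · intro g hg
    by_cases h : (⟨g, hg⟩ : G) ∈ H0 G
    · exact Or.inr (hone g ⟨⟨g, hg⟩, h, rfl⟩)
    · exact Or.inl (hzero ⟨g, hg⟩ h)
end
end LP

set_option linter.unusedSectionVars false
namespace LP
section
open Matrix MvPolynomial
variable {k : Type*} [Field k] {m : Type*} [Fintype m] [DecidableEq m]

theorem compl_of_ss (G : Subgroup (GL m k)) (h : IsSemisimpleModule (MonoidAlgebra k G)
      (Representation.asModule (stdRepOf G))) : Compl G := by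
  have h' := (Representation.isSemisimpleRepresentation_iff_isSemisimpleModule_asModule (stdRepOf G)).2 h
  have hap : ∀ (g : G) (v : m → k), stdRepOf G g v = ((g : GL m k) : Matrix m m k) *ᵥ v := fun g v => rfl
  intro U hU
  let U' : Subrepresentation (stdRepOf G) := ⟨U, fun g v hv => hU g g.2 v hv⟩
  obtain ⟨C, hC⟩ := h'.exists_isCompl U'
  refine ⟨C.toSubmodule, fun g hg u hu => C.apply_mem_toSubmodule ⟨g, hg⟩ hu, ?_⟩
  constructor
  · rw [disjoint_iff]
    have := congrArg Subrepresentation.toSubmodule hC.inf_eq_bot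
    exact this
  · rw [codisjoint_iff]
    have := congrArg Subrepresentation.toSubmodule hC.sup_eq_top
    exact this

def mc {ι : Type*} [Fintype ι] (P : Matrix ι ι (Pol m k)) (ξ w : ι → k) : Pol m k :=
  ∑ i, ∑ j, C (ξ i * w j) * P i j

theorem ev_mc {ι : Type*} [Fintype ι] (P : Matrix ι ι (Pol m k)) (ξ w : ι → k) (g : GL m k) :
    ev g (mc P ξ w) = ξ ⬝ᵥ (P.map (ev g) *ᵥ w) := by
  have hC : ∀ (h : GL m k) a, ev h (C a) = a := fun h a => (ev h).commutes a
  simp only [mc, map_sum, map_mul, hC, dotProduct, mulVec, Matrix.map_apply, Finset.mul_sum]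
  exact Finset.sum_congr rfl fun _ _ => Finset.sum_congr rfl fun _ _ => by ring

theorem Dv_mc {ι : Type*} [Fintype ι] [DecidableEq ι] {P : Matrix ι ι (Pol m k)} {d : Matrix m m k → Matrix ι ι k}
    (hP : Good P d) (ξ w : ι → k) (A : Matrix m m k) :
    Dv A (mc P ξ w) = mc P ξ (d A *ᵥ w) := by
  have hD : ∀ i j, Dv A (P i j) = ∑ l, P i l * C (d A l j) := fun i j => congrFun (congrFun (hP.der A) i) j
  have hC : ∀ (c : k) p, Dv A (C c * p) = C c * Dv A p := by
    intro c p
    rw [← MvPolynomial.smul_eq_C_mul, Derivation.map_smul, MvPolynomial.smul_eq_C_mul]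
  simp only [mc, map_sum, hC, hD]
  simp only [Finset.mul_sum, mulVec, dotProduct, map_mul, map_sum, Finset.sum_mul]
  refine Finset.sum_congr rfl fun i _ => ?_
  rw [Finset.sum_comm]
  exact Finset.sum_congr rfl fun _ _ => Finset.sum_congr rfl fun _ _ => by ring

theorem final [CharZero k] (G : Subgroup (GL m k)) (hG : zIsClosed (G : Set (GL m k))) (hc : Compl G)
    (hinv : ∀ (s : ℕ) (ρW : GL m k →* GL (Fin s) k),
      (∀ i j : Fin s, ∃ p : Pol m k, ∀ g : GL m k, ((ρW g : GL (Fin s) k) : Matrix (Fin s) (Fin s) k) i j = ev g p) →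
      ∀ w : Fin s → k,
          (∀ g ∈ zComponentIn (G : Set (GL m k)) 1,
            ((ρW g : GL (Fin s) k) : Matrix (Fin s) (Fin s) k).mulVec w = w) → 
         (∀ g ∈ G, ((ρW g : GL (Fin s) k) : Matrix (Fin s) (Fin s) k).mulVec w = w)) :
    zIsConnected (G : Set (GL m k)) := by
  by_contra hn
  obtain ⟨f, hf1, ⟨g0, hg0, hf0⟩, hf⟩ := indicator G hG hn
  obtain ⟨s, P, d, ξ, F, hP, hfe⟩ := coeff f
  let N : Submodule k (Fin s → k) :=
    { carrier := {w | ∀ g ∈ G, ξ ⬝ᵥ (P.map (ev g) *ᵥ w) = 0}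
      add_mem' := by
        intro a b ha hb g hg
        rw [mulVec_add, dotProduct_add, ha g hg, hb g hg, add_zero]
      zero_mem' := by intro g hg; simp
      smul_mem' := by
        intro c a ha g hg
        rw [mulVec_smul, dotProduct_smul, ha g hg, smul_zero] }
  have hNG : ∀ g ∈ G, ∀ u ∈ N, P.map (ev g) *ᵥ u ∈ N := by
    intro g hg u hu h hh
    rw [mulVec_mulVec, ← hP.mul]
    exact hu _ (G.mul_mem hh hg)
  have hFN : F ∉ N := by
    intro h
    have := h 1 G.one_mem
    rw [← hfe, hf1] at this
    exact one_ne_zero this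
  have hdF : ∀ A ∈ lieG (G : Set (GL m k)), d A *ᵥ F ∈ N := by
    intro A hA g hg
    have hmem : mc P ξ F * mc P ξ F - mc P ξ F ∈ vI (G : Set (GL m k)) := by
      intro h hh
      rw [map_sub, map_mul, ev_mc, ← hfe]
      rcases hf h hh with h | h <;> rw [h] <;> simp
    have := hA _ hmem g hg
    rw [map_sub, Derivation.leibniz, smul_eq_mul, map_sub, map_add, map_mul, Dv_mc hP, ev_mc, ev_mc, ← hfe] at this
    rcases hf g hg with h | h <;> rw [h] at this
    · simpa using this
    · simpa using this
  obtain ⟨w, hw, c, hc0, hwN⟩ := weyl_mat G hc hP N (fun A hA w hw => stable_lie hP N hNG hA hw) F hFN hdF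
  let ρ0 : GL m k →* Matrix (Fin s) (Fin s) k :=
    { toFun := fun g => P.map (ev g), map_one' := hP.one, map_mul' := hP.mul }
  have hfix := hinv s ρ0.toHomUnits (fun i j => ⟨P i j, fun g => rfl⟩) w (by
    intro g hg
    show P.map (ev g) *ᵥ w = w
    ext i
    have h1 := const_of_finite (mc P (Pi.single i 1) w) (finite_values G _ (fun A hA => by
      rw [Dv_mc hP, hw A hA]
      intro g hg
      rw [ev_mc]; simp)) hg
    rw [ev_mc, ev_mc, hP.one, one_mulVec, single_one_dotProduct, single_one_dotProduct] at h1
    exact h1)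
  have hval : ∀ g ∈ G, c * ev g f = ξ ⬝ᵥ w := by
    intro g hg
    have h1 := hwN g hg
    have h2 : P.map (ev g) *ᵥ w = w := hfix g hg
    rw [mulVec_sub, h2, mulVec_smul, dotProduct_sub, dotProduct_smul, ← hfe, sub_eq_zero] at h1
    exact h1.symm
  have := (hval g0 hg0).trans (hval 1 G.one_mem).symm
  rw [hf0, hf1] at this
  simp at this
  exact hc0 this.symm
end
end LP

/-- Larsen–Pink criterion: Let `G ⊆ GL(V)` be a reductive algebraic group over
a field of characteristic zero (reductivity being expressed, as is equivalent in
characteristic zero, by the semisimplicity of the standard module `V` over `G`). If for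
every finite-dimensional (algebraic) representation `W` of the ambient `GL(V)` one has
`W^G = W^{G⁰}`, then `G` is connected. -/
theorem larsen_pink_connectedness_criterion
    {K : Type*} [Field K] [CharZero K] {nn : Type*} [Fintype nn] [DecidableEq nn]
    (G : Subgroup (GL nn K)) (hGcl : zIsClosed (G : Set (GL nn K)))
    (hred : IsSemisimpleModule (MonoidAlgebra K G)
      (Representation.asModule (stdRepOf G)))
    (hinv : ∀ (s : ℕ) (ρW : GL nn K →* GL (Fin s) K),
      (∀ i j : Fin s, ∃ p : MvPolynomial ((nn × nn) ⊕ (nn × nn)) K,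
        ∀ g : GL nn K, ((ρW g : GL (Fin s) K) : Matrix (Fin s) (Fin s) K) i j =
          MvPolynomial.eval
            (Sum.elim (fun q => ((g : GL nn K) : Matrix nn nn K) q.1 q.2)
              (fun q => (((g⁻¹ : GL nn K)) : Matrix nn nn K) q.1 q.2)) p) →
      ∀ w : Fin s → K,
        ((∀ g ∈ G, ((ρW g : GL (Fin s) K) : Matrix (Fin s) (Fin s) K).mulVec w = w) ↔
          (∀ g ∈ zComponentIn (G : Set (GL nn K)) 1,
            ((ρW g : GL (Fin s) K) : Matrix (Fin s) (Fin s) K).mulVec w = w))) :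
    zIsConnected (G : Set (GL nn K)) := by
  refine LP.final G hGcl (LP.compl_of_ss G hred) fun s ρW hρ w hw => ?_
  refine (hinv s ρW (fun i j => ?_) w).2 hw
  obtain ⟨p, hp⟩ := hρ i j
  exact ⟨p, fun g => by rw [hp, LP.ev_eq]⟩
end
end
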